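/- arXiv:1805.06854 — 2 statements merged into one kernel-verified Lean document; each statement's English description precedes it below -/
import Mathlib

section
/- Let p be a prime and G = (ℤ/p)^n an elementary abelian p-group of rank n ≤ 2. If C is a non-acyclic perfect chain complex of 𝔽_p[G]-modules, then Σ_i dim_{𝔽_p} H_i(C) ≥ 2^n. -/
/-! Statement 2: If `G = (ℤ/p)^n` with `n ≤ 2` and `C` is a non-acyclic perfect chain complex
of `𝔽_p[G]`-modules, then `Σ_i dim_{𝔽_p} H_i(C) ≥ 2^n`.

A chain complex of `𝔽_p[G]`-modules is encoded as a single `𝔽_p[G]`-module together with an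
internal `ℤ`-grading and a square-zero differential of degree `-1`.  `Σ_i dim H_i(C)` is the
`𝔽_p`-dimension of the total homology `ker d ⧸ im d`. -/

/-- The group algebra `k[(ℤ/p)ⁿ]`. -/
abbrev GroupRing (p n : ℕ) (k : Type) [Field k] : Type := AddMonoidAlgebra k (Fin n → ZMod p)

/-- A `ℤ`-graded `N`-complex of modules over the group algebra `k[(ℤ/p)ⁿ]`:
a module with an internal grading and a degree `-1` differential `d` with `d ^ N = 0`. -/
structure KGCx (p n : ℕ) (k : Type) [Field k] (N : ℕ) : Type 1 where
  X : Type
  [acg : AddCommGroup X]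
  [modR : Module (GroupRing p n k) X]
  [modk : Module k X]
  [tower : IsScalarTower k (GroupRing p n k) X]
  d : X →ₗ[GroupRing p n k] X
  gr : ℤ → Submodule (GroupRing p n k) X
  internal : DirectSum.IsInternal gr
  d_deg : ∀ m : ℤ, ∀ x ∈ gr m, d x ∈ gr (m - 1)
  d_pow : d ^ N = 0

attribute [instance] KGCx.acg KGCx.modR KGCx.modk KGCx.tower

namespace KGCx

variable {p n N : ℕ} {k : Type} [Field k] (C : KGCx p n k N)

/-- Perfect: the underlying graded module has a finite homogeneous basis over the group ring
(i.e. it is a bounded complex of finitely generated free modules). -/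
def IsPerfect : Prop :=
  ∃ (ι : Type) (_ : Fintype ι) (deg : ι → ℤ) (b : Module.Basis ι (GroupRing p n k) C.X),
    ∀ a, b a ∈ C.gr (deg a)

/-- Non-acyclic: the (total) homology is nonzero. -/
def NonAcyclic : Prop := ∃ x : C.X, C.d x = 0 ∧ x ∉ LinearMap.range C.d

/-- The differential as a `k`-linear map. -/
noncomputable def dk : C.X →ₗ[k] C.X := C.d.restrictScalars k

/-- The total homology `ker d ⧸ im d` as a `k`-vector space; its dimension is
`Σ_i dim_k H_i(C)`. -/
noncomputable abbrev TotalHomology : Type :=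
  ↥(LinearMap.ker C.dk) ⧸ (LinearMap.range C.dk).comap (LinearMap.ker C.dk).subtype

end KGCx

/-!
Write `R = k[(ℤ/p)ⁿ]`. The Euler characteristic of a perfect complex is divisible by
`dim R = p ^ n`. If the total dimension of the homology lies strictly between `0` and `2 ^ n` with
`n ≤ 2`, this forces `n = 2` and homology of dimension one in two degrees `a < c`, zero elsewhere.

In that case the cycles `Z_a` and the boundaries `B_c` have finite projective dimension, because the
complex is exact below `a` and above `c`, and the sequences `0 → Z_{i+1} → C_{i+1} → B_i → 0` with
free middle terms shift `Ext`. Hence `Ext^m(H_c, W) ≅ Ext^{m+c-a+1}(H_a, W)` for all large `m`.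
But `H_a` and `H_c` are both the trivial module `k`, and `Ext^m(k, k)` has dimension `m + 1` when
`n = 2`; comparing dimensions for `W = k` gives a contradiction.
-/

universe u v

section ModuleExt

open CategoryTheory Abelian Filter

variable (R : Type u) [CommRing R]

/-- The module `M` has finite projective dimension. -/
def HasFiniteProjectiveDimension (M : Type v) [AddCommGroup M] [Module R M] : Prop :=
  ∃ n, HasProjectiveDimensionLT (ModuleCat.of R M) n

/-- `Extᵐ(M, N)` for unbundled `R`-modules. -/
abbrev ModuleExt [Small.{v} R] (M N : Type v) [AddCommGroup M] [Module R M] [AddCommGroup N]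
    [Module R N] (m : ℕ) : Type v :=
  Ext.{v} (ModuleCat.of R M) (ModuleCat.of R N) m

variable {R} {A B Q : Type v} [AddCommGroup A] [Module R A] [AddCommGroup B] [Module R B]
  [AddCommGroup Q] [Module R Q] {f : A →ₗ[R] B} {g : B →ₗ[R] Q}

theorem hasFiniteProjectiveDimension_of_projective (P : Type v) [AddCommGroup P]
    [Module R P] [Module.Projective R P] : HasFiniteProjectiveDimension R P :=
  ⟨1, inferInstance⟩

section Exact

variable (hf : Function.Injective f) (hg : Function.Surjective g) (hfg : Function.Exact f g)

include hf hg hfg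

theorem exists_shortExact_of_exact :
    ∃ w, (ShortComplex.mk (ModuleCat.ofHom f) (ModuleCat.ofHom g) w).ShortExact :=
  ⟨by rw [← ModuleCat.ofHom_comp, hfg.linearMap_comp_eq_zero]; rfl,
    { exact := (ShortComplex.ShortExact.moduleCat_exact_iff_function_exact _).2 hfg
      mono_f := (ModuleCat.mono_iff_injective _).2 hf
      epi_g := (ModuleCat.epi_iff_surjective _).2 hg }⟩

theorem HasFiniteProjectiveDimension.left (hB : HasFiniteProjectiveDimension R B)
    (hQ : HasFiniteProjectiveDimension R Q) : HasFiniteProjectiveDimension R A := by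
  obtain ⟨w, hS⟩ := exists_shortExact_of_exact hf hg hfg
  obtain ⟨⟨b, hb⟩, ⟨q, hq⟩⟩ := hB, hQ
  exact ⟨max b q, hS.hasProjectiveDimensionLT_X₁ _
    (hasProjectiveDimensionLT_of_ge _ b _ (le_max_left b q))
    (hasProjectiveDimensionLT_of_ge _ q _ (by omega))⟩

theorem HasFiniteProjectiveDimension.right (hA : HasFiniteProjectiveDimension R A)
    (hB : HasFiniteProjectiveDimension R B) : HasFiniteProjectiveDimension R Q := by
  obtain ⟨w, hS⟩ := exists_shortExact_of_exact hf hg hfg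
  obtain ⟨⟨a, ha⟩, ⟨b, hb⟩⟩ := hA, hB
  exact ⟨max a b + 1, hS.hasProjectiveDimensionLT_X₃ _
    (hasProjectiveDimensionLT_of_ge _ a _ (le_max_left a b))
    (hasProjectiveDimensionLT_of_ge _ b _ (by omega))⟩

variable [Small.{v} R] (N : Type v) [AddCommGroup N] [Module R N]

theorem nonempty_moduleExt_equiv_succ {m : ℕ}
    (h : ∀ e : ModuleExt R B N m, (Ext.mk₀ (ModuleCat.ofHom f)).comp e (zero_add m) = 0)
    [Subsingleton (ModuleExt R B N (m + 1))] :
    Nonempty (ModuleExt R A N m ≃ₗ[R] ModuleExt R Q N (m + 1)) := by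
  obtain ⟨w, hS⟩ := exists_shortExact_of_exact hf hg hfg
  refine ⟨.ofBijective (hS.extClass.precompOfLinear R (ModuleCat.of R N) (add_comm 1 m))
    ⟨(injective_iff_map_eq_zero _).2 fun e he => ?_, fun e => ?_⟩⟩
  · obtain ⟨e', rfl⟩ := Ext.contravariant_sequence_exact₁ hS _ e (add_comm 1 m) he
    exact h e'
  · exact Ext.contravariant_sequence_exact₃ hS _ e (Subsingleton.elim _ _) (add_comm 1 m)

theorem HasFiniteProjectiveDimension.eventually_moduleExt_equiv_succ
    (hB : HasFiniteProjectiveDimension R B) :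
    ∀ᶠ m in atTop, Nonempty (ModuleExt R A N m ≃ₗ[R] ModuleExt R Q N (m + 1)) := by
  obtain ⟨n, hB⟩ := hB
  filter_upwards [eventually_ge_atTop n] with m hm
  have := hB.subsingleton _ n (m + 1) (by omega) (ModuleCat.of R N)
  refine nonempty_moduleExt_equiv_succ hf hg hfg N fun e => ?_
  rw [e.eq_zero_of_hasProjectiveDimensionLT n hm, Ext.comp_zero]

theorem HasFiniteProjectiveDimension.eventually_moduleExt_equiv
    (hA : HasFiniteProjectiveDimension R A) :
    ∀ᶠ m in atTop, Nonempty (ModuleExt R Q N m ≃ₗ[R] ModuleExt R B N m) := by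
  obtain ⟨w, hS⟩ := exists_shortExact_of_exact hf hg hfg
  obtain ⟨n, hA⟩ := hA
  filter_upwards [eventually_gt_atTop n] with m hm
  refine ⟨.ofBijective ((Ext.mk₀ (ModuleCat.ofHom g)).precompOfLinear R (ModuleCat.of R N)
    (zero_add m)) ⟨(injective_iff_map_eq_zero _).2 fun e he => ?_, fun e => ?_⟩⟩
  · obtain ⟨e', rfl⟩ := Ext.contravariant_sequence_exact₃ hS _ e he (n₀ := m - 1) (by omega)
    rw [e'.eq_zero_of_hasProjectiveDimensionLT n (by omega), Ext.comp_zero]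
  · exact Ext.contravariant_sequence_exact₂ hS _ e
      (Ext.eq_zero_of_hasProjectiveDimensionLT _ n hm.le)

end Exact

theorem nonempty_moduleExt_equiv_of_minimal [Small.{v} R] {F : ℕ → Type v}
    [∀ m, AddCommGroup (F m)] [∀ m, Module R (F m)] [∀ m, Module.Projective R (F m)]
    {d : ∀ m, F (m + 1) →ₗ[R] F m} (hd : ∀ m, Function.Exact (d (m + 1)) (d m))
    {M : Type v} [AddCommGroup M] [Module R M] {ε : F 0 →ₗ[R] M} (hε : Function.Surjective ε)
    (hdε : Function.Exact (d 0) ε) {N : Type v} [AddCommGroup N] [Module R N]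
    (hN : ∀ m, ∀ φ : F m →ₗ[R] N, φ ∘ₗ d m = 0) (m : ℕ) :
    Nonempty (ModuleExt R M N m ≃ₗ[R] (F m →ₗ[R] N)) := by
  induction m generalizing F M with
  | zero =>
    exact ⟨Ext.linearEquiv₀ ≪≫ₗ ModuleCat.homLinearEquiv (S := R) ≪≫ₗ .ofBijective
      (LinearMap.lcomp R N ε) ⟨LinearMap.lcomp_injective_of_surjective ε hε, fun φ =>
        (LinearMap.exact_lcomp_of_exact_of_surjective N hdε hε φ).1 (hN 0 φ)⟩⟩
  | succ m ih =>
    have hex : Function.Exact (LinearMap.range (d 0)).subtype ε := by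
      rw [LinearMap.exact_iff, Submodule.range_subtype, hdε.linearMap_ker_eq]
    have hrange : Function.Exact (d 1) (d 0).rangeRestrict := by
      rw [LinearMap.exact_iff, LinearMap.ker_rangeRestrict, (hd 0).linearMap_ker_eq]
    have hrestrict (φ : F 0 →ₗ[R] N) : φ ∘ₗ (LinearMap.range (d 0)).subtype = 0 := by
      ext ⟨_, y, rfl⟩
      exact LinearMap.congr_fun (hN 0 φ) y
    have := Ext.subsingleton_of_projective (ModuleCat.of R (F 0)) (ModuleCat.of R N) m
    obtain ⟨e⟩ := nonempty_moduleExt_equiv_succ (LinearMap.range (d 0)).injective_subtype hε hex N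
      (m := m) fun e => by
        cases m with
        | zero =>
          obtain ⟨φ, rfl⟩ := Ext.mk₀_bijective _ _ |>.2 e
          rw [Ext.mk₀_comp_mk₀, ← ModuleCat.ofHom_hom φ, ← ModuleCat.ofHom_comp, hrestrict]
          exact Ext.mk₀_zero _ _
        | succ m => rw [e.eq_zero_of_projective, Ext.comp_zero]
    obtain ⟨e'⟩ := ih (fun m => hd (m + 1)) (LinearMap.surjective_rangeRestrict _) hrange
      fun m => hN (m + 1)
    exact ⟨e.symm ≪≫ₗ e'⟩

end ModuleExt

section ExactPair

variable {R : Type u} [CommRing R]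

/-- `(a, b)` is an exact pair of zero divisors: each of `a`, `b` generates the annihilator of the
other, so that `⋯ → R → R → R` with differentials `a, b, a, b, …` is a resolution of `R ⧸ (a)`. -/
structure IsExactPair (a b : R) : Prop where
  mul_left_eq_zero_iff : ∀ r, a * r = 0 ↔ b ∣ r
  mul_right_eq_zero_iff : ∀ r, b * r = 0 ↔ a ∣ r

/-- The sequence `a, b, a, b, …`. -/
def alternate {α : Type*} (a b : α) (i : ℕ) : α := if Even i then a else b

theorem map_alternate {α β : Type*} (φ : α → β) (a b : α) (i : ℕ) :
    φ (alternate a b i) = alternate (φ a) (φ b) i :=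
  apply_ite φ _ a b

theorem alternate_succ_mul_alternate {a b : R} (hab : a * b = 0) (i : ℕ) :
    alternate a b (i + 1) * alternate a b i = 0 := by
  by_cases hi : Even i <;> simp [alternate, Nat.even_add_one, hi, hab, mul_comm b a]

namespace IsExactPair

variable {a b : R}

theorem symm (h : IsExactPair a b) : IsExactPair b a :=
  ⟨h.mul_right_eq_zero_iff, h.mul_left_eq_zero_iff⟩

theorem mul_eq_zero (h : IsExactPair a b) : a * b = 0 :=
  (h.mul_left_eq_zero_iff b).2 dvd_rfl

theorem alternate (h : IsExactPair a b) (i : ℕ) :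
    IsExactPair (alternate a b i) (alternate a b (i + 1)) := by
  by_cases hi : Even i
  · simpa [_root_.alternate, Nat.even_add_one, hi] using h
  · simpa [_root_.alternate, Nat.even_add_one, hi] using h.symm

/-- `ρ` factors through `R ⧸ (x)` and is a section of the quotient map whose image contains `a` and
`b`. -/
theorem quotient_of_retraction (h : IsExactPair a b) {x : R} (ρ : R →+* R)
    (hρ : ∀ r, x ∣ r - ρ r) (hx : ρ x = 0) (ha : ρ a = a) (hb : ρ b = b) :
    IsExactPair (Ideal.Quotient.mk (Ideal.span {x}) a) (Ideal.Quotient.mk (Ideal.span {x}) b) := by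
  have hmk (r : R) : Ideal.Quotient.mk (Ideal.span {x}) r = 0 ↔ ρ r = 0 := by
    rw [Ideal.Quotient.eq_zero_iff_dvd]
    exact ⟨fun ⟨s, hs⟩ => by rw [hs, map_mul, hx, zero_mul],
      fun hr => by simpa only [hr, sub_zero] using hρ r⟩
  have key {c d : R} (hc : ρ c = c) (hcd : ∀ r, c * r = 0 ↔ d ∣ r)
      (q : R ⧸ Ideal.span {x}) : Ideal.Quotient.mk _ c * q = 0 ↔ Ideal.Quotient.mk _ d ∣ q := by
    obtain ⟨r, rfl⟩ := Ideal.Quotient.mk_surjective q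
    have hr : Ideal.Quotient.mk (Ideal.span {x}) r = Ideal.Quotient.mk _ (ρ r) := by
      rw [Ideal.Quotient.mk_eq_mk_iff_sub_mem, Ideal.mem_span_singleton]
      exact hρ r
    constructor
    · rw [← map_mul, hmk, map_mul, hc, hcd, hr]
      exact map_dvd _
    · rintro ⟨s, hs⟩
      rw [hs, ← mul_assoc, ← map_mul, (hcd d).2 dvd_rfl, map_zero, zero_mul]
  exact ⟨key ha h.mul_left_eq_zero_iff, key hb h.mul_right_eq_zero_iff⟩

theorem exists_eq_mul_add_mul {x r : R}
    (h : IsExactPair (Ideal.Quotient.mk (Ideal.span {x}) a) (Ideal.Quotient.mk (Ideal.span {x}) b))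
    (hr : x ∣ a * r) : ∃ s t, r = x * s + b * t := by
  rw [← Ideal.Quotient.eq_zero_iff_dvd, map_mul, h.mul_left_eq_zero_iff] at hr
  obtain ⟨t, ht⟩ := hr
  obtain ⟨t, rfl⟩ := Ideal.Quotient.mk_surjective t
  rw [← map_mul, Ideal.Quotient.mk_eq_mk_iff_sub_mem, Ideal.mem_span_singleton] at ht
  obtain ⟨s, hs⟩ := ht
  exact ⟨s, t, sub_eq_iff_eq_add.1 hs⟩

end IsExactPair

section Resolution

variable (x N y L : R)

/-- The differential of the tensor product of the periodic complexes with differentials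
`x, N, x, N, …` and `y, L, y, L, …`. The `i`-th coordinate in total degree `m` is the summand of
bidegree `(i, m - i)`. -/
def periodicBicomplexDifferential (m : ℕ) : (Fin (m + 2) → R) →ₗ[R] (Fin (m + 1) → R) :=
  LinearMap.pi fun i => alternate x N i • LinearMap.proj i.succ +
    ((-1) ^ (i : ℕ) * alternate y L (m - i)) • LinearMap.proj i.castSucc

variable {x N y L}

theorem periodicBicomplexDifferential_apply (m : ℕ) (f : Fin (m + 2) → R) (i : Fin (m + 1)) :
    periodicBicomplexDifferential x N y L m f i =
      alternate x N i * f i.succ + (-1) ^ (i : ℕ) * alternate y L (m - i) * f i.castSucc :=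
  rfl

theorem periodicBicomplexDifferential_comp (hxN : x * N = 0) (hyL : y * L = 0) (m : ℕ) :
    periodicBicomplexDifferential x N y L m ∘ₗ periodicBicomplexDifferential x N y L (m + 1) =
      0 := by
  refine LinearMap.ext fun f => funext fun i => ?_
  have hα := alternate_succ_mul_alternate hxN i
  have hβ := alternate_succ_mul_alternate hyL (m - i)
  rw [← Nat.sub_add_comm i.is_le] at hβ
  simp only [LinearMap.comp_apply, periodicBicomplexDifferential_apply, Fin.val_succ,
    Fin.val_castSucc, Fin.succ_castSucc, Nat.add_sub_add_right, LinearMap.zero_apply,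
    Pi.zero_apply]
  linear_combination f i.succ.succ * hα + ((-1) ^ (i : ℕ)) ^ 2 * f i.castSucc.castSucc * hβ

/-- The equations `f = d g` are solved one coordinate at a time: exactness modulo `x` gives the
zeroth one, exactness of the pair `(x, N)` the others. -/
theorem exists_preimage_coordinates (hx : IsExactPair x N) (hyL : y * L = 0)
    (hxy : IsExactPair (Ideal.Quotient.mk (Ideal.span {x}) y)
      (Ideal.Quotient.mk (Ideal.span {x}) L)) {m : ℕ} {f : ℕ → R}
    (hf : ∀ i ≤ m, alternate x N i * f (i + 1) +
      (-1) ^ i * alternate y L (m - i) * f i = 0) (n : ℕ) (hn : n ≤ m + 1) :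
    ∃ g : ℕ → R, ∀ i ≤ n, f i =
      alternate x N i * g (i + 1) + (-1) ^ i * alternate y L (m + 1 - i) * g i := by
  induction n with
  | zero =>
    have hf0 : x ∣ alternate y L m * f 0 := by
      refine ⟨-f 1, ?_⟩
      have := hf 0 m.zero_le
      simp only [alternate, Nat.sub_zero, Even.zero, if_true] at this ⊢
      linear_combination this
    have hxy' := hxy.alternate m
    rw [← map_alternate (Ideal.Quotient.mk _), ← map_alternate (Ideal.Quotient.mk _)] at hxy'
    obtain ⟨s, t, hst⟩ := hxy'.exists_eq_mul_add_mul hf0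
    refine ⟨fun i => if i = 0 then t else s, fun i hi => ?_⟩
    obtain rfl := Nat.le_zero.1 hi
    simpa [alternate] using hst
  | succ n ih =>
    obtain ⟨g, hg⟩ := ih (by omega)
    have hstep : alternate x N n *
        (f (n + 1) - (-1) ^ (n + 1) * alternate y L (m - n) * g (n + 1)) = 0 := by
      have hβ := alternate_succ_mul_alternate hyL (m - n)
      rw [← Nat.sub_add_comm (by omega)] at hβ
      have hfn := hf n (by omega)
      rw [hg n le_rfl] at hfn
      linear_combination hfn - ((-1) ^ n) ^ 2 * g n * hβ
    obtain ⟨r, hr⟩ := ((hx.alternate n).mul_left_eq_zero_iff _).1 hstep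
    refine ⟨Function.update g (n + 2) r, fun i hi => ?_⟩
    rcases hi.lt_or_eq with hi | rfl
    · rw [Function.update_of_ne (by omega), Function.update_of_ne (by omega), hg i (by omega)]
    · rw [Function.update_self, Function.update_of_ne (by omega), Nat.add_sub_add_right]
      linear_combination hr

theorem exact_periodicBicomplexDifferential (hx : IsExactPair x N) (hyL : y * L = 0)
    (hxy : IsExactPair (Ideal.Quotient.mk (Ideal.span {x}) y)
      (Ideal.Quotient.mk (Ideal.span {x}) L)) (m : ℕ) :
    Function.Exact (periodicBicomplexDifferential x N y L (m + 1))
      (periodicBicomplexDifferential x N y L m) := by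
  refine LinearMap.exact_of_comp_of_mem_range
    (periodicBicomplexDifferential_comp hx.mul_eq_zero hyL m) fun f hf => ?_
  obtain ⟨g, hg⟩ := exists_preimage_coordinates hx hyL hxy (m := m)
    (f := fun i => f (Fin.ofNat (m + 2) i)) (fun i hi => by
      have hfi := congrFun hf ⟨i, Nat.lt_succ_of_le hi⟩
      rwa [periodicBicomplexDifferential_apply, ← Fin.ofNat_val_eq_self (Fin.succ _),
        ← Fin.ofNat_val_eq_self (Fin.castSucc _)] at hfi) (m + 1) le_rfl
  refine ⟨fun i => g i, funext fun i => ?_⟩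
  rw [periodicBicomplexDifferential_apply, Fin.val_succ, Fin.val_castSucc, ← hg i i.is_le,
    Fin.ofNat_val_eq_self]

section Augmentation

variable {M : Type*} [AddCommGroup M] [Module R M] {v : M}

theorem exact_periodicBicomplexDifferential_zero
    (hann : LinearMap.ker (LinearMap.toSpanSingleton R M v) = Ideal.span {x, y}) :
    Function.Exact (periodicBicomplexDifferential x N y L 0)
      (LinearMap.toSpanSingleton R M v ∘ₗ LinearMap.proj (0 : Fin 1)) := by
  intro f
  rw [LinearMap.comp_apply, ← LinearMap.mem_ker, hann, LinearMap.proj_apply,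
    Ideal.mem_span_pair]
  constructor
  · rintro ⟨r, s, h⟩
    refine ⟨![s, r], funext fun i => ?_⟩
    obtain rfl := Fin.fin_one_eq_zero i
    simp [periodicBicomplexDifferential_apply, alternate, ← h, mul_comm]
  · rintro ⟨g, rfl⟩
    exact ⟨g 1, g 0, by simp [periodicBicomplexDifferential_apply, alternate, mul_comm]⟩

theorem comp_periodicBicomplexDifferential_eq_zero
    (hM : ∀ r ∈ ({x, N, y, L} : Set R), ∀ w : M, r • w = 0) (m : ℕ)
    (φ : (Fin (m + 1) → R) →ₗ[R] M) : φ ∘ₗ periodicBicomplexDifferential x N y L m = 0 := by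
  have hα (i : ℕ) (w : M) : alternate x N i • w = 0 := by
    unfold alternate; split_ifs <;> exact hM _ (by simp) w
  have hβ (i : ℕ) (w : M) : alternate y L i • w = 0 := by
    unfold alternate; split_ifs <;> exact hM _ (by simp) w
  refine LinearMap.ext fun f => ?_
  rw [LinearMap.comp_apply, LinearMap.pi_apply_eq_sum_univ]
  refine Finset.sum_eq_zero fun i _ => ?_
  rw [periodicBicomplexDifferential_apply, add_smul, mul_right_comm, mul_comm, mul_smul, mul_smul,
    hα, hβ, smul_zero, smul_zero, add_zero]

end Augmentation

theorem nonempty_moduleExt_equiv_pi (hx : IsExactPair x N) (hyL : y * L = 0)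
    (hxy : IsExactPair (Ideal.Quotient.mk (Ideal.span {x}) y)
      (Ideal.Quotient.mk (Ideal.span {x}) L))
    {M : Type u} [AddCommGroup M] [Module R M] {v : M}
    (hv : Function.Surjective (LinearMap.toSpanSingleton R M v))
    (hann : LinearMap.ker (LinearMap.toSpanSingleton R M v) = Ideal.span {x, y})
    (W : Type u) [AddCommGroup W] [Module R W]
    (hW : ∀ r ∈ ({x, N, y, L} : Set R), ∀ w : W, r • w = 0) (m : ℕ) :
    Nonempty (ModuleExt R M W m ≃ₗ[R] (Fin (m + 1) → W)) := by
  obtain ⟨e⟩ := nonempty_moduleExt_equiv_of_minimal (F := fun m => Fin (m + 1) → R)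
    (exact_periodicBicomplexDifferential hx hyL hxy)
    (hv.comp (LinearMap.proj_surjective (0 : Fin 1)))
    (exact_periodicBicomplexDifferential_zero hann)
    (comp_periodicBicomplexDifferential_eq_zero hW) m
  exact ⟨e ≪≫ₗ ((Pi.basisFun R (Fin (m + 1))).constr R).symm⟩

end Resolution

end ExactPair

section GroupAlgebra

open AddMonoidAlgebra

variable {k A : Type*} [CommRing k] [AddCommGroup A] {q : ℕ}

variable (k) in
/-- The element `g - 1` of `k[A]`, where `g` is the image of the generator of `ℤ/q` under
`j : ℤ/q → A`. -/
noncomputable def genSubOne (j : ZMod q →+ A) : k[A] := single (j 1) 1 - 1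

variable (k) in
/-- The norm element of `k[A]` attached to `j : ℤ/q → A`: the sum of the elements `j c`. -/
noncomputable def normElement [NeZero q] (j : ZMod q →+ A) : k[A] := ∑ c, single (j c) 1

variable {j : ZMod q →+ A} {π : A →+ ZMod q}

theorem coeff_normElement_mul [NeZero q] (v : k[A]) (a : A) :
    (normElement k j * v).coeff a = ∑ c, v.coeff (a - j c) := by
  simp only [normElement, Finset.sum_mul, coeff_sum, Finsupp.finsetSum_apply,
    coeff_single_mul_apply, one_mul, neg_add_eq_sub]

theorem genSubOne_dvd_single_sub_one [NeZero q] (c : ZMod q) :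
    genSubOne k j ∣ single (j c) 1 - 1 := by
  have hc : (single (j c) 1 : k[A]) = single (j 1) 1 ^ c.val := by
    rw [single_pow, one_pow, ← map_nsmul, nsmul_one, ZMod.natCast_zmod_val]
  simpa only [genSubOne, hc, one_pow] using sub_dvd_pow_sub_pow (single (j 1) 1 : k[A]) 1 c.val

theorem genSubOne_mul_normElement [NeZero q] : genSubOne k j * normElement k j = 0 := by
  rw [genSubOne, sub_mul, one_mul, sub_eq_zero, normElement, Finset.mul_sum]
  refine Fintype.sum_equiv (Equiv.addLeft 1) _ _ fun c => ?_
  rw [single_mul_single, one_mul, ← map_add, Equiv.coe_addLeft]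

theorem coeff_sub_of_genSubOne_mul_eq_zero [NeZero q] {v : k[A]} (hv : genSubOne k j * v = 0)
    (a : A) (c : ZMod q) : v.coeff (a - j c) = v.coeff a := by
  obtain ⟨w, hw⟩ := genSubOne_dvd_single_sub_one (k := k) (j := j) c
  have hcv : single (j c) 1 * v = v := by
    linear_combination (hw * v) + w * hv
  conv_rhs => rw [← hcv]
  rw [coeff_single_mul_apply, one_mul, neg_add_eq_sub]

theorem normElement_dvd_of_genSubOne_mul_eq_zero [NeZero q] (hπ : ∀ c, π (j c) = c) {v : k[A]}
    (hv : genSubOne k j * v = 0) : normElement k j ∣ v := by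
  classical
  refine ⟨ofCoeff (v.coeff.filter fun a => π a = 0), AddMonoidAlgebra.ext (Finsupp.ext fun a => ?_)⟩
  simp only [coeff_normElement_mul, Finsupp.filter_apply, map_sub, hπ,
    coeff_sub_of_genSubOne_mul_eq_zero hv, sub_eq_zero, Finset.sum_ite_eq, Finset.mem_univ, if_true]

/-- The endomorphism of `k[A]` induced by the projection of `A` onto `ker π` along the image
of `j`. -/
noncomputable def projectAlong (k : Type*) [CommRing k] (j : ZMod q →+ A) (π : A →+ ZMod q) :
    k[A] →+* k[A] :=
  mapDomainRingHom k (AddMonoidHom.id A - j.comp π)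

theorem projectAlong_single (a : A) (r : k) :
    projectAlong k j π (single a r) = single (a - j (π a)) r :=
  mapDomain_single

theorem genSubOne_dvd_sub_projectAlong [NeZero q] (r : k[A]) :
    genSubOne k j ∣ r - projectAlong k j π r := by
  induction r using AddMonoidAlgebra.induction_linear with
  | zero => simp
  | add r s hr hs =>
    rw [map_add, add_sub_add_comm]
    exact dvd_add hr hs
  | single a c =>
    have h : (single a c : k[A]) - projectAlong k j π (single a c) =
        single (a - j (π a)) c * (single (j (π a)) 1 - 1) := by
      rw [mul_sub, single_mul_single, sub_add_cancel, mul_one, mul_one, projectAlong_single]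
    exact h ▸ (genSubOne_dvd_single_sub_one _).mul_left _

theorem coeff_projectAlong_of_ne_zero (hπ : ∀ c, π (j c) = c) (r : k[A]) {a : A}
    (ha : π a ≠ 0) : (projectAlong k j π r).coeff a = 0 :=
  Finsupp.mapDomain_of_notMem_range _ _ fun ⟨b, hb⟩ => ha (by simp [← hb, hπ])

theorem genSubOne_dvd_of_normElement_mul_eq_zero [NeZero q] (hπ : ∀ c, π (j c) = c) {v : k[A]}
    (hv : normElement k j * v = 0) : genSubOne k j ∣ v := by
  suffices hproj : projectAlong k j π v = 0 by
    simpa only [hproj, sub_zero] using genSubOne_dvd_sub_projectAlong (j := j) (π := π) v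
  have hnorm : normElement k j * projectAlong k j π v = 0 := by
    obtain ⟨w, hw⟩ := genSubOne_dvd_sub_projectAlong (j := j) (π := π) v
    linear_combination hv - normElement k j * hw - w * genSubOne_mul_normElement (k := k) (j := j)
  refine AddMonoidAlgebra.ext (Finsupp.ext fun a => ?_)
  by_cases ha : π a = 0
  · rw [← hnorm, coeff_normElement_mul, Finset.sum_eq_single 0, map_zero, sub_zero]
    · exact fun c _ hc => coeff_projectAlong_of_ne_zero hπ v (by simpa [ha, hπ] using hc)
    · simp
  · exact coeff_projectAlong_of_ne_zero hπ v ha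

theorem isExactPair_genSubOne_normElement [NeZero q] (hπ : ∀ c, π (j c) = c) :
    IsExactPair (genSubOne k j) (normElement k j) where
  mul_left_eq_zero_iff v := by
    refine ⟨normElement_dvd_of_genSubOne_mul_eq_zero hπ, ?_⟩
    rintro ⟨w, rfl⟩
    rw [← mul_assoc, genSubOne_mul_normElement, zero_mul]
  mul_right_eq_zero_iff v := by
    refine ⟨genSubOne_dvd_of_normElement_mul_eq_zero hπ, ?_⟩
    rintro ⟨w, rfl⟩
    rw [← mul_assoc, mul_comm (normElement k j), genSubOne_mul_normElement, zero_mul]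

theorem isExactPair_quotient_genSubOne [NeZero q] {j₀ j₁ : ZMod q →+ A} {π₀ π₁ : A →+ ZMod q}
    (h₀ : ∀ c, π₀ (j₀ c) = c) (h₁ : ∀ c, π₁ (j₁ c) = c) (h₀₁ : ∀ c, π₀ (j₁ c) = 0) :
    IsExactPair (Ideal.Quotient.mk (Ideal.span {genSubOne k j₀}) (genSubOne k j₁))
      (Ideal.Quotient.mk (Ideal.span {genSubOne k j₀}) (normElement k j₁)) := by
  refine (isExactPair_genSubOne_normElement h₁).quotient_of_retraction (projectAlong k j₀ π₀)
    genSubOne_dvd_sub_projectAlong ?_ ?_ ?_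
  · rw [genSubOne, map_sub, projectAlong_single, h₀, sub_self, ← one_def, map_one, sub_self]
  · rw [genSubOne, map_sub, projectAlong_single, h₀₁, map_zero, sub_zero,
      map_one (projectAlong k j₀ π₀)]
  · simp only [normElement, map_sum, projectAlong_single, h₀₁, map_zero, sub_zero]

section Trivial

variable {K M : Type*} [Field K] {p : ℕ} [Fact p.Prime] [CharP K p] [AddCommGroup M] [Module K M]
  [Module K[A] M] [IsScalarTower K K[A] M]

theorem single_smul_of_finrank_eq_one (hM : Module.finrank K M = 1) {a : A} (ha : p • a = 0)
    (w : M) : (single a 1 : K[A]) • w = w := by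
  have hcharP : CharP K[A] p := charP_of_injective_algebraMap (algebraMap K K[A]).injective p
  have hpow : (single a 1 - 1 : K[A]) ^ p = 0 := by
    rw [sub_pow_char, single_pow, ha, one_pow, one_pow, ← one_def, sub_self]
  obtain ⟨c, hc, -⟩ := LinearMap.existsUnique_eq_smul_id_of_finrank_eq_one hM
    (Algebra.lsmul K K M (single a 1 - 1 : K[A]))
  have hcp : c ^ p • w = 0 := by
    have h := congrArg (fun f => (f ^ p) w) hc
    simpa only [← map_pow, hpow, map_zero, LinearMap.zero_apply, smul_pow, ← Module.End.one_eq_id,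
      one_pow, LinearMap.smul_apply, Module.End.one_apply, eq_comm] using h
  have hcw : c • w = 0 := by
    rcases smul_eq_zero.1 hcp with h | h
    · rw [eq_zero_of_pow_eq_zero h, zero_smul]
    · rw [h, smul_zero]
  have haw : (single a 1 - 1 : K[A]) • w = c • w := LinearMap.congr_fun hc w
  rwa [hcw, sub_smul, one_smul, sub_eq_zero] at haw

theorem genSubOne_smul (hM : Module.finrank K M = 1) (j : ZMod p →+ A) (w : M) :
    genSubOne K j • w = 0 := by
  rw [genSubOne, sub_smul, one_smul,
    single_smul_of_finrank_eq_one (p := p) hM (by simp [← map_nsmul]), sub_self]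

theorem normElement_smul (hM : Module.finrank K M = 1) (j : ZMod p →+ A) (w : M) :
    normElement K j • w = 0 := by
  have htriv (c : ZMod p) : (single (j c) 1 : K[A]) • w = w :=
    single_smul_of_finrank_eq_one (p := p) hM (by simp [← map_nsmul]) w
  rw [normElement, Finset.sum_smul, Finset.sum_congr rfl fun c _ => htriv c, Finset.sum_const,
    Finset.card_univ, ZMod.card, ← Nat.cast_smul_eq_nsmul K, CharP.cast_eq_zero, zero_smul]

end Trivial

theorem exists_sub_algebraMap_mem {I : Ideal k[A]} (hI : ∀ a, single a 1 - 1 ∈ I) (r : k[A]) :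
    ∃ c : k, r - algebraMap k k[A] c ∈ I := by
  induction r using AddMonoidAlgebra.induction_linear with
  | zero => exact ⟨0, by simp⟩
  | add r s hr hs =>
    obtain ⟨c, hc⟩ := hr
    obtain ⟨d, hd⟩ := hs
    exact ⟨c + d, by simpa only [map_add, add_sub_add_comm] using I.add_mem hc hd⟩
  | single a c =>
    refine ⟨c, ?_⟩
    have h : single a c - algebraMap k k[A] c = algebraMap k k[A] c * (single a 1 - 1) := by
      simp [mul_sub, AddMonoidAlgebra.coe_algebraMap, single_mul_single]
    exact h ▸ I.mul_mem_left _ (hI a)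

theorem single_sub_one_mem_span_genSubOne [NeZero q] {j₀ j₁ : ZMod q →+ A} {a : A} {c₀ c₁ : ZMod q}
    (ha : j₀ c₀ + j₁ c₁ = a) : single a 1 - 1 ∈ Ideal.span {genSubOne k j₀, genSubOne k j₁} := by
  have hmem (j : ZMod q →+ A) (hj : genSubOne k j ∈ Ideal.span {genSubOne k j₀, genSubOne k j₁})
      (c : ZMod q) : single (j c) 1 - 1 ∈ Ideal.span {genSubOne k j₀, genSubOne k j₁} :=
    Ideal.mem_of_dvd _ (genSubOne_dvd_single_sub_one c) hj
  have hmul : (single a 1 - 1 : k[A]) =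
      single (j₀ c₀) 1 * (single (j₁ c₁) 1 - 1) + (single (j₀ c₀) 1 - 1) := by
    rw [mul_sub, single_mul_single, ha, one_mul, mul_one, sub_add_sub_cancel]
  rw [hmul]
  exact add_mem (Ideal.mul_mem_left _ _ (hmem j₁ (Ideal.subset_span (by simp)) c₁))
    (hmem j₀ (Ideal.subset_span (by simp)) c₀)

section RankTwo

variable {K A : Type u} [Field K] [AddCommGroup A] {p : ℕ} [Fact p.Prime] [CharP K p]
  {j₀ j₁ : ZMod p →+ A} {π₀ π₁ : A →+ ZMod p}
  {M W : Type u} [AddCommGroup M] [Module K M] [Module K[A] M] [IsScalarTower K K[A] M]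
  [AddCommGroup W] [Module K W] [Module K[A] W] [IsScalarTower K K[A] W]

theorem ker_toSpanSingleton_eq_span_genSubOne (hsum : ∀ a, j₀ (π₀ a) + j₁ (π₁ a) = a)
    (hM : Module.finrank K M = 1) {v : M} (hv : v ≠ 0) :
    LinearMap.ker (LinearMap.toSpanSingleton K[A] M v) =
      Ideal.span {genSubOne K j₀, genSubOne K j₁} := by
  have hle : Ideal.span {genSubOne K j₀, genSubOne K j₁} ≤
      LinearMap.ker (LinearMap.toSpanSingleton K[A] M v) := by
    rw [Ideal.span_le]
    rintro _ (rfl | rfl) <;> exact genSubOne_smul hM _ v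
  refine le_antisymm (fun r hr => ?_) hle
  obtain ⟨c, hc⟩ := exists_sub_algebraMap_mem
    (fun a => single_sub_one_mem_span_genSubOne (k := K) (hsum a)) r
  have hcv : c • v = 0 := by
    have hker := sub_mem hr (hle hc)
    rwa [sub_sub_cancel, LinearMap.mem_ker, LinearMap.toSpanSingleton_apply,
      algebraMap_smul] at hker
  have hc0 : c = 0 := (smul_eq_zero.1 hcv).resolve_right hv
  simpa [hc0] using hc

theorem nonempty_moduleExt_equiv_pi_of_finrank_eq_one (h₀ : ∀ c, π₀ (j₀ c) = c)
    (h₁ : ∀ c, π₁ (j₁ c) = c) (h₀₁ : ∀ c, π₀ (j₁ c) = 0) (hsum : ∀ a, j₀ (π₀ a) + j₁ (π₁ a) = a)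
    (hM : Module.finrank K M = 1) (hW : Module.finrank K W = 1) (m : ℕ) :
    Nonempty (ModuleExt K[A] M W m ≃ₗ[K[A]] (Fin (m + 1) → W)) := by
  have := Module.nontrivial_of_finrank_eq_succ hM
  obtain ⟨v, hv⟩ := exists_ne (0 : M)
  have hsurj : Function.Surjective (LinearMap.toSpanSingleton K[A] M v) := fun w => by
    obtain ⟨c, hc⟩ := exists_smul_eq_of_finrank_eq_one hM hv w
    exact ⟨algebraMap K K[A] c, by rwa [LinearMap.toSpanSingleton_apply, algebraMap_smul]⟩
  refine nonempty_moduleExt_equiv_pi (isExactPair_genSubOne_normElement h₀)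
    genSubOne_mul_normElement (isExactPair_quotient_genSubOne h₀ h₁ h₀₁) hsurj
    (ker_toSpanSingleton_eq_span_genSubOne hsum hM hv) W ?_ m
  rintro _ (rfl | rfl | rfl | rfl) w
  exacts [genSubOne_smul hW _ w, normElement_smul hW _ w, genSubOne_smul hW _ w,
    normElement_smul hW _ w]

end RankTwo

end GroupAlgebra

theorem finrank_eq_add_of_exact {k R A M Q : Type*} [Field k] [Ring R] [Algebra k R]
    [AddCommGroup A] [AddCommGroup M] [AddCommGroup Q] [Module R A] [Module R M] [Module R Q]
    [Module k A] [Module k M] [Module k Q] [IsScalarTower k R A] [IsScalarTower k R M]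
    [IsScalarTower k R Q] [Module.Finite k M] {f : A →ₗ[R] M} {g : M →ₗ[R] Q}
    (hf : Function.Injective f) (hg : Function.Surjective g) (hfg : Function.Exact f g) :
    Module.finrank k M = Module.finrank k A + Module.finrank k Q := by
  have hker : LinearMap.ker (g.restrictScalars k) = LinearMap.range (f.restrictScalars k) :=
    (LinearMap.exact_iff (f := f.restrictScalars k) (g := g.restrictScalars k)).1 hfg
  rw [← (g.restrictScalars k).finrank_range_add_finrank_ker, hker,
    LinearMap.finrank_range_of_inj (f := f.restrictScalars k) hf,
    (LinearMap.range_eq_top (f := g.restrictScalars k)).2 hg, finrank_top, add_comm]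

namespace KGCx

open Module Finset

variable {p n N : ℕ} {k : Type} [Field k]

section Grading

variable (C : KGCx p n k N)

/-- The projection onto the component of degree `i`. -/
noncomputable def proj (i : ℤ) : C.X →ₗ[GroupRing p n k] C.X :=
  letI := C.internal.chooseDecomposition
  (C.gr i).subtype ∘ₗ DirectSum.component (GroupRing p n k) ℤ (fun i => C.gr i) i ∘ₗ
    (DirectSum.decomposeLinearEquiv C.gr).toLinearMap

/-- The cycles of degree `i`. -/
noncomputable def cyc (i : ℤ) : Submodule (GroupRing p n k) C.X := C.gr i ⊓ LinearMap.ker C.d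

/-- The boundaries of degree `i`. -/
noncomputable def bdy (i : ℤ) : Submodule (GroupRing p n k) C.X := C.gr i ⊓ LinearMap.range C.d

/-- The homology in degree `i`. -/
abbrev Homology (i : ℤ) : Type := C.cyc i ⧸ (C.bdy i).submoduleOf (C.cyc i)

theorem proj_mem (i : ℤ) (x : C.X) : C.proj i x ∈ C.gr i := Subtype.property _

variable {C}

theorem proj_of_mem {i : ℤ} {x : C.X} (hx : x ∈ C.gr i) : C.proj i x = x :=
  letI := C.internal.chooseDecomposition
  DirectSum.decompose_of_mem_same C.gr hx

theorem proj_of_mem_of_ne {i j : ℤ} {x : C.X} (hx : x ∈ C.gr i) (hij : i ≠ j) : C.proj j x = 0 :=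
  letI := C.internal.chooseDecomposition
  DirectSum.decompose_of_mem_ne C.gr hx hij

theorem linearMap_ext_gr {M : Type*} [AddCommGroup M] [Module (GroupRing p n k) M]
    {f g : C.X →ₗ[GroupRing p n k] M} (h : ∀ i, ∀ x ∈ C.gr i, f x = g x) : f = g := by
  rw [← LinearMap.eqLocus_eq_top, eq_top_iff, ← C.internal.submodule_iSup_eq_top]
  exact iSup_le h

theorem d_proj (i : ℤ) (x : C.X) : C.d (C.proj (i + 1) x) = C.proj i (C.d x) := by
  refine LinearMap.congr_fun (f := C.d ∘ₗ C.proj (i + 1)) (g := C.proj i ∘ₗ C.d)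
    (linearMap_ext_gr fun j x hx => ?_) x
  rw [LinearMap.comp_apply, LinearMap.comp_apply]
  by_cases hj : j = i + 1
  · subst hj
    rw [proj_of_mem hx, proj_of_mem (by simpa using C.d_deg _ _ hx)]
  · rw [proj_of_mem_of_ne hx hj, proj_of_mem_of_ne (C.d_deg _ _ hx) (by omega), map_zero]

theorem exists_surjective_bdy (i : ℤ) : ∃ g : C.gr (i + 1) →ₗ[GroupRing p n k] C.bdy i,
    Function.Surjective g ∧
      Function.Exact (Submodule.inclusion (inf_le_left : C.cyc (i + 1) ≤ C.gr (i + 1))) g := by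
  refine ⟨(C.d.comp (C.gr (i + 1)).subtype).codRestrict _ fun x =>
    ⟨by simpa using C.d_deg _ _ x.2, ⟨_, rfl⟩⟩, ?_, fun x => ⟨fun h => ?_, ?_⟩⟩
  · rintro ⟨_, hy, x, rfl⟩
    exact ⟨⟨C.proj (i + 1) x, C.proj_mem _ _⟩, Subtype.ext ((d_proj i x).trans (proj_of_mem hy))⟩
  · exact ⟨⟨x, x.2, congrArg Subtype.val h⟩, rfl⟩
  · rintro ⟨y, rfl⟩
    exact Subtype.ext y.2.2

theorem cyc_eq_bot {i : ℤ} (h : C.gr i = ⊥) : C.cyc i = ⊥ :=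
  le_bot_iff.1 (inf_le_left.trans h.le)

theorem bdy_eq_bot {i : ℤ} (h : C.gr i = ⊥) : C.bdy i = ⊥ :=
  le_bot_iff.1 (inf_le_left.trans h.le)

theorem subsingleton_homology {i : ℤ} (h : C.gr i = ⊥) : Subsingleton (C.Homology i) := by
  have : Subsingleton (C.cyc i) := by
    rw [cyc_eq_bot h]
    infer_instance
  infer_instance

variable {S : Finset ℤ}

theorem sum_proj (hS : ∀ i ∉ S, C.gr i = ⊥) (x : C.X) : ∑ i ∈ S, C.proj i x = x := by
  rw [← LinearMap.sum_apply]
  refine LinearMap.congr_fun (g := LinearMap.id) (linearMap_ext_gr fun j x hx => ?_) x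
  rw [LinearMap.sum_apply, sum_eq_single j, proj_of_mem hx, LinearMap.id_apply]
  · exact fun i _ hi => proj_of_mem_of_ne hx hi.symm
  · intro hj
    rw [hS j hj, Submodule.mem_bot] at hx
    rw [hx, map_zero]

variable [Module.Finite k C.X]

instance (U : Submodule (GroupRing p n k) C.X) : Module.Finite k U :=
  inferInstanceAs (Module.Finite k (U.restrictScalars k))

theorem finrank_eq_sum (hS : ∀ i ∉ S, C.gr i = ⊥) (U : Submodule (GroupRing p n k) C.X)
    (hU : ∀ i, ∀ x ∈ U, C.proj i x ∈ U) :
    finrank k U = ∑ i ∈ S, finrank k ↥(C.gr i ⊓ U) := by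
  let f : U →ₗ[GroupRing p n k] (i : S) → ↥(C.gr i ⊓ U) := LinearMap.pi fun i =>
    ((C.proj i).comp U.subtype).codRestrict _ fun x => ⟨C.proj_mem i x, hU i x x.2⟩
  have hinj : Function.Injective f := by
    refine (injective_iff_map_eq_zero _).2 fun x hx => Subtype.ext ?_
    rw [← sum_proj hS (x : C.X)]
    exact sum_eq_zero fun i hi => congrArg Subtype.val (congrFun hx ⟨i, hi⟩)
  have hsurj : Function.Surjective f := fun y => by
    refine ⟨⟨∑ i, (y i : C.X), Submodule.sum_mem _ fun i _ => (y i).2.2⟩,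
      funext fun i => Subtype.ext ?_⟩
    change C.proj i (∑ i, (y i : C.X)) = y i
    rw [map_sum, sum_eq_single i, proj_of_mem (y i).2.1]
    · exact fun j _ hj => proj_of_mem_of_ne (y j).2.1 fun h => hj (Subtype.ext h)
    · simp
  rw [((LinearEquiv.ofBijective f ⟨hinj, hsurj⟩).restrictScalars k).finrank_eq,
    finrank_pi_fintype, ← Finset.sum_coe_sort S]

theorem finrank_gr_succ (i : ℤ) : finrank k (C.gr (i + 1)) =
    finrank k (C.cyc (i + 1)) + finrank k (C.bdy i) := by
  obtain ⟨g, hg, hexact⟩ := C.exists_surjective_bdy i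
  exact finrank_eq_add_of_exact (Submodule.inclusion_injective _) hg hexact

end Grading

section Perfect

variable {C : KGCx p n k N}

theorem gr_eq_span {ι : Type} {deg : ι → ℤ} (b : Basis ι (GroupRing p n k) C.X)
    (hb : ∀ e, b e ∈ C.gr (deg e)) (i : ℤ) :
    C.gr i = Submodule.span _ (Set.range fun e : {e // deg e = i} => b e) := by
  apply le_antisymm
  · suffices LinearMap.range (C.proj i) ≤
        Submodule.span _ (Set.range fun e : {e // deg e = i} => b e) from
      fun x hx => this ⟨x, proj_of_mem hx⟩
    rw [LinearMap.range_eq_map, ← b.span_eq, Submodule.map_span, Submodule.span_le]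
    rintro _ ⟨_, ⟨e, rfl⟩, rfl⟩
    by_cases he : deg e = i
    · rw [proj_of_mem (he ▸ hb e)]
      exact Submodule.subset_span ⟨⟨e, he⟩, rfl⟩
    · rw [proj_of_mem_of_ne (hb e) he]
      exact Submodule.zero_mem _
  · rw [Submodule.span_le]
    rintro _ ⟨⟨e, rfl⟩, rfl⟩
    exact hb e

theorem IsPerfect.free_gr (hC : C.IsPerfect) (i : ℤ) : Module.Free (GroupRing p n k) (C.gr i) := by
  obtain ⟨ι, _, deg, b, hb⟩ := hC
  rw [gr_eq_span b hb]
  exact .of_basis (.span (b.linearIndependent.comp _ Subtype.val_injective))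

theorem IsPerfect.exists_finset_gr_eq_bot (hC : C.IsPerfect) :
    ∃ S : Finset ℤ, ∀ i ∉ S, C.gr i = ⊥ := by
  obtain ⟨ι, _, deg, b, hb⟩ := hC
  refine ⟨univ.image deg, fun i hi => ?_⟩
  rw [gr_eq_span b hb, Submodule.span_eq_bot]
  rintro _ ⟨⟨e, rfl⟩, rfl⟩
  exact absurd (mem_image_of_mem deg (mem_univ e)) hi

theorem IsPerfect.finite [NeZero p] (hC : C.IsPerfect) : Module.Finite k C.X := by
  obtain ⟨ι, _, _, b, _⟩ := hC
  have := Module.Finite.of_basis b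
  have : Module.Finite k (GroupRing p n k) :=
    .equiv (AddMonoidAlgebra.coeffLinearEquiv k).symm
  exact .trans (GroupRing p n k) C.X

theorem finrank_groupRing [NeZero p] : finrank k (GroupRing p n k) = p ^ n := by
  rw [(AddMonoidAlgebra.coeffLinearEquiv k).finrank_eq, finrank_finsupp_self, Fintype.card_fun,
    ZMod.card, Fintype.card_fin]

theorem IsPerfect.dvd_finrank_gr [NeZero p] (hC : C.IsPerfect) (i : ℤ) :
    p ^ n ∣ finrank k (C.gr i) := by
  have := hC.free_gr i
  rw [← finrank_mul_finrank k (GroupRing p n k) (C.gr i), finrank_groupRing]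
  exact dvd_mul_right _ _

end Perfect

section Homology

variable (C : KGCx p n k 2)

theorem d_d (x : C.X) : C.d (C.d x) = 0 := by
  rw [← Module.End.mul_apply, ← pow_two, C.d_pow, LinearMap.zero_apply]

theorem bdy_le_cyc (i : ℤ) : C.bdy i ≤ C.cyc i := by
  rintro _ ⟨h, x, rfl⟩
  exact ⟨h, C.d_d x⟩

theorem exact_homology (i : ℤ) : Function.Exact (Submodule.inclusion (C.bdy_le_cyc i))
    ((C.bdy i).submoduleOf (C.cyc i)).mkQ := by
  rw [LinearMap.exact_iff, Submodule.ker_mkQ, Submodule.range_inclusion]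
  rfl

variable {C}

theorem cyc_eq_bdy {i : ℤ} (h : Subsingleton (C.Homology i)) : C.cyc i = C.bdy i :=
  le_antisymm (Submodule.submoduleOf_eq_top.1 (Submodule.Quotient.subsingleton_iff.1 h))
    (C.bdy_le_cyc i)

section Dimension

variable [Module.Finite k C.X]

theorem finrank_cyc (i : ℤ) :
    finrank k (C.cyc i) = finrank k (C.bdy i) + finrank k (C.Homology i) :=
  finrank_eq_add_of_exact (R := GroupRing p n k) (Submodule.inclusion_injective _)
    (Submodule.mkQ_surjective _) (C.exact_homology i)

theorem finrank_totalHomology_add_finrank_range :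
    finrank k C.TotalHomology + finrank k (LinearMap.range C.d) =
      finrank k (LinearMap.ker C.d) := by
  have hle : LinearMap.range C.dk ≤ LinearMap.ker C.dk := by
    rintro _ ⟨x, rfl⟩
    exact C.d_d x
  have h := Submodule.finrank_quotient_add_finrank
    ((LinearMap.range C.dk).comap (LinearMap.ker C.dk).subtype)
  rwa [(Submodule.comapSubtypeEquivOfLe hle).finrank_eq] at h

theorem finrank_totalHomology_eq_sum {S : Finset ℤ} (hS : ∀ i ∉ S, C.gr i = ⊥) :
    finrank k C.TotalHomology = ∑ i ∈ S, finrank k (C.Homology i) := by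
  have hrange : finrank k (LinearMap.range C.d) = ∑ i ∈ S, finrank k (C.bdy i) :=
    finrank_eq_sum hS _ <| by
      rintro i _ ⟨x, rfl⟩
      exact ⟨C.proj (i + 1) x, d_proj i x⟩
  have hker : finrank k (LinearMap.ker C.d) = ∑ i ∈ S, finrank k (C.cyc i) :=
    finrank_eq_sum hS _ fun i x hx => by
      obtain ⟨i, rfl⟩ : ∃ l, i = l + 1 := ⟨i - 1, by ring⟩
      rw [LinearMap.mem_ker] at hx ⊢
      rw [d_proj, hx, map_zero]
  have h := C.finrank_totalHomology_add_finrank_range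
  rw [hrange, hker, sum_congr rfl fun i _ => finrank_cyc i, sum_add_distrib] at h
  omega

theorem NonAcyclic.finrank_totalHomology_pos (hC : C.NonAcyclic) :
    0 < finrank k C.TotalHomology := by
  obtain ⟨x, hx, hx'⟩ := hC
  let z : LinearMap.ker C.dk := ⟨x, hx⟩
  have : Nontrivial C.TotalHomology :=
    ⟨Submodule.Quotient.mk z, 0, fun h => by
      rw [Submodule.Quotient.mk_eq_zero] at h
      exact hx' h⟩
  exact finrank_pos

end Dimension

section Ext

open Filter

variable {a : ℤ} {S : Finset ℤ}

theorem hasFiniteProjectiveDimension_cyc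
    (hproj : ∀ i, Module.Projective (GroupRing p n k) (C.gr i)) (hS : ∀ i ∉ S, C.gr i = ⊥)
    (hacyclic : ∀ i < a, C.cyc i = C.bdy i) :
    HasFiniteProjectiveDimension (GroupRing p n k) (C.cyc a) := by
  obtain ⟨l, hla, hl⟩ := (Set.Iic_infinite a).exists_notMem_finset S
  suffices ∀ i, l ≤ i → i ≤ a → HasFiniteProjectiveDimension (GroupRing p n k) (C.cyc i) from
    this a hla le_rfl
  intro i hi
  induction i, hi using Int.leInduction with
  | base =>
    intro _
    rw [cyc_eq_bot (hS l hl)]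
    exact hasFiniteProjectiveDimension_of_projective _
  | succ i _ ih =>
    intro hia
    have hbdy := ih (by omega)
    rw [hacyclic i (by omega)] at hbdy
    obtain ⟨g, hg, hexact⟩ := C.exists_surjective_bdy i
    exact .left (Submodule.inclusion_injective _) hg hexact
      (hasFiniteProjectiveDimension_of_projective _) hbdy

theorem hasFiniteProjectiveDimension_bdy
    (hproj : ∀ i, Module.Projective (GroupRing p n k) (C.gr i)) (hS : ∀ i ∉ S, C.gr i = ⊥)
    (hacyclic : ∀ i, a < i → C.cyc i = C.bdy i) :
    HasFiniteProjectiveDimension (GroupRing p n k) (C.bdy a) := by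
  obtain ⟨u, hau, hu⟩ := (Set.Ici_infinite a).exists_notMem_finset S
  suffices ∀ i ≤ u, a ≤ i → HasFiniteProjectiveDimension (GroupRing p n k) (C.bdy i) from
    this a hau le_rfl
  intro i hi
  induction i, hi using Int.leInductionDown with
  | base =>
    intro _
    rw [bdy_eq_bot (hS u hu)]
    exact hasFiniteProjectiveDimension_of_projective _
  | pred i _ ih =>
    intro hai
    obtain ⟨i, rfl⟩ : ∃ l, i = l + 1 := ⟨i - 1, by ring⟩
    rw [add_sub_cancel_right] at hai ⊢
    have hcyc := ih (by omega)
    rw [← hacyclic (i + 1) (by omega)] at hcyc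
    obtain ⟨g, hg, hexact⟩ := C.exists_surjective_bdy i
    exact .right (Submodule.inclusion_injective _) hg hexact hcyc
      (hasFiniteProjectiveDimension_of_projective _)

variable (W : Type) [AddCommGroup W] [Module (GroupRing p n k) W]

theorem eventually_moduleExt_cyc_equiv_bdy
    (hproj : ∀ i, Module.Projective (GroupRing p n k) (C.gr i)) (l : ℕ)
    (hacyclic : ∀ i, a < i → i < a + l + 1 → C.cyc i = C.bdy i) :
    ∀ᶠ m in atTop, Nonempty (ModuleExt (GroupRing p n k) (C.cyc (a + l + 1)) W m
      ≃ₗ[GroupRing p n k] ModuleExt (GroupRing p n k) (C.bdy a) W (m + (l + 1))) := by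
  have hsucc (i : ℤ) : ∀ᶠ m in atTop, Nonempty (ModuleExt (GroupRing p n k) (C.cyc (i + 1)) W m
      ≃ₗ[GroupRing p n k] ModuleExt (GroupRing p n k) (C.bdy i) W (m + 1)) := by
    obtain ⟨g, hg, hexact⟩ := C.exists_surjective_bdy i
    exact HasFiniteProjectiveDimension.eventually_moduleExt_equiv_succ
      (Submodule.inclusion_injective _) hg hexact W
      (hasFiniteProjectiveDimension_of_projective _)
  induction l with
  | zero =>
    rw [Nat.cast_zero, add_zero]
    exact hsucc a
  | succ l ih =>
    rw [Nat.cast_succ, ← add_assoc]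
    have ih := ih fun i hai hi => hacyclic i hai (by push_cast; omega)
    rw [hacyclic (a + l + 1) (by omega) (by push_cast; omega)] at ih
    filter_upwards [hsucc (a + l + 1), (tendsto_add_atTop_nat 1).eventually ih]
      with m ⟨e⟩ ⟨e'⟩
    rw [show m + (l + 1 + 1) = m + 1 + (l + 1) by ring]
    exact ⟨e ≪≫ₗ e'⟩

theorem eventually_moduleExt_homology_equiv
    (hproj : ∀ i, Module.Projective (GroupRing p n k) (C.gr i)) (hS : ∀ i ∉ S, C.gr i = ⊥) (l : ℕ)
    (hacyclic : ∀ i, i ≠ a → i ≠ a + l + 1 → C.cyc i = C.bdy i) :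
    ∀ᶠ m in atTop, Nonempty (ModuleExt (GroupRing p n k) (C.Homology (a + l + 1)) W m
      ≃ₗ[GroupRing p n k] ModuleExt (GroupRing p n k) (C.Homology a) W (m + (l + 1) + 1)) := by
  have htop := HasFiniteProjectiveDimension.eventually_moduleExt_equiv
    (Submodule.inclusion_injective _) (Submodule.mkQ_surjective _) (C.exact_homology (a + l + 1)) W
    (hasFiniteProjectiveDimension_bdy hproj hS fun i hi => hacyclic i (by omega) hi.ne')
  have hmiddle := eventually_moduleExt_cyc_equiv_bdy (a := a) W hproj l
    fun i hai hi => hacyclic i hai.ne' hi.ne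
  have hbottom := HasFiniteProjectiveDimension.eventually_moduleExt_equiv_succ
    (Submodule.inclusion_injective _) (Submodule.mkQ_surjective _) (C.exact_homology a) W
    (hasFiniteProjectiveDimension_cyc hproj hS fun i hi => hacyclic i hi.ne (by omega))
  filter_upwards [htop, hmiddle, (tendsto_add_atTop_nat (l + 1)).eventually hbottom]
    with m ⟨e₁⟩ ⟨e₂⟩ ⟨e₃⟩
  exact ⟨e₁ ≪≫ₗ e₂ ≪≫ₗ e₃⟩

end Ext

end Homology

section RankTwo

variable [Fact p.Prime] [CharP k p]

theorem nonempty_moduleExt_groupRing_equiv_pi {M W : Type} [AddCommGroup M] [Module k M]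
    [Module (GroupRing p 2 k) M] [IsScalarTower k (GroupRing p 2 k) M] [AddCommGroup W]
    [Module k W] [Module (GroupRing p 2 k) W] [IsScalarTower k (GroupRing p 2 k) W]
    (hM : finrank k M = 1) (hW : finrank k W = 1) (m : ℕ) :
    Nonempty (ModuleExt (GroupRing p 2 k) M W m ≃ₗ[GroupRing p 2 k] (Fin (m + 1) → W)) :=
  nonempty_moduleExt_equiv_pi_of_finrank_eq_one (p := p)
    (j₀ := AddMonoidHom.single (fun _ : Fin 2 => ZMod p) 0)
    (j₁ := AddMonoidHom.single (fun _ : Fin 2 => ZMod p) 1)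
    (π₀ := Pi.evalAddMonoidHom _ 0) (π₁ := Pi.evalAddMonoidHom _ 1)
    (fun _ => by simp) (fun _ => by simp) (fun _ => by simp)
    (fun a => by simpa using Finset.univ_sum_single a) hM hW m

theorem not_acyclic_outside_pair {C : KGCx p 2 k 2}
    (hproj : ∀ i, Module.Projective (GroupRing p 2 k) (C.gr i)) {S : Finset ℤ}
    (hS : ∀ i ∉ S, C.gr i = ⊥) {a c : ℤ} (hac : a < c) (ha : finrank k (C.Homology a) = 1)
    (hc : finrank k (C.Homology c) = 1) : ∃ i, i ≠ a ∧ i ≠ c ∧ C.cyc i ≠ C.bdy i := by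
  by_contra! hacyclic
  obtain ⟨l, rfl⟩ : ∃ l : ℕ, c = a + l + 1 := ⟨(c - a - 1).toNat, by omega⟩
  obtain ⟨m, ⟨e⟩⟩ := (eventually_moduleExt_homology_equiv (C.Homology a) hproj hS l hacyclic).exists
  obtain ⟨e₁⟩ := nonempty_moduleExt_groupRing_equiv_pi hc ha m
  obtain ⟨e₂⟩ := nonempty_moduleExt_groupRing_equiv_pi ha ha (m + (l + 1) + 1)
  have := Module.finite_of_finrank_eq_succ ha
  have hdim := ((e₁.symm ≪≫ₗ e ≪≫ₗ e₂).restrictScalars k).finrank_eq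
  rw [finrank_pi_fintype, finrank_pi_fintype] at hdim
  simp only [ha, sum_const, card_univ, Fintype.card_fin, smul_eq_mul, mul_one] at hdim
  omega

end RankTwo

end KGCx

section AlternatingSum

theorem dvd_sum_negOnePow_mul {d : ℤ} {S : Finset ℤ} {b h : ℤ → ℤ} (hb : ∀ i ∉ S, b i = 0)
    (hh : ∀ i ∉ S, h i = 0) (hd : ∀ i, d ∣ b i + h i + b (i - 1)) :
    d ∣ ∑ i ∈ S, (i.negOnePow : ℤ) * h i := by
  have hfinite {f : ℤ → ℤ} (hf : ∀ i ∉ S, f i = 0) :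
      (Function.support fun i => (i.negOnePow : ℤ) * f i).Finite :=
    S.finite_toSet.subset fun i hi => by_contra fun hiS => hi (by simp [hf i hiS])
  have hb_finite := hfinite hb
  have hb_sub_finite : (Function.support fun i : ℤ => ((i - 1).negOnePow : ℤ) * b (i - 1)).Finite :=
    hb_finite.preimage (sub_left_injective (b := (1 : ℤ))).injOn
  have hshift : ∑ᶠ i : ℤ, ((i - 1).negOnePow : ℤ) * b (i - 1) =
      ∑ᶠ i : ℤ, (i.negOnePow : ℤ) * b i :=
    finsum_comp_equiv (Equiv.subRight (1 : ℤ)) (f := fun i => (i.negOnePow : ℤ) * b i)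
  have hcancel : ∑ᶠ i : ℤ, (i.negOnePow : ℤ) * h i =
      ∑ᶠ i : ℤ, (i.negOnePow : ℤ) * (b i + h i + b (i - 1)) := calc
    _ = ∑ᶠ i : ℤ, (i.negOnePow : ℤ) * h i + (∑ᶠ i : ℤ, (i.negOnePow : ℤ) * b i -
          ∑ᶠ i : ℤ, ((i - 1).negOnePow : ℤ) * b (i - 1)) := by rw [hshift, sub_self, add_zero]
    _ = ∑ᶠ i : ℤ, ((i.negOnePow : ℤ) * h i + ((i.negOnePow : ℤ) * b i -
          ((i - 1).negOnePow : ℤ) * b (i - 1))) := by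
      rw [← finsum_sub_distrib hb_finite hb_sub_finite, ← finsum_add_distrib (hfinite hh)
        ((hb_finite.union hb_sub_finite).subset (Function.support_sub _ _))]
    _ = _ := finsum_congr fun i => by
      rw [Int.negOnePow_sub, Int.negOnePow_one]
      push_cast
      ring
  rw [← finsum_eq_sum_of_support_subset _ fun i hi =>
    by_contra fun hiS => hi (by simp [hh i hiS]), hcancel]
  exact finsum_induction (d ∣ ·) (dvd_zero d) (fun _ _ => dvd_add)
    fun i => (hd i).mul_left _

theorem sum_negOnePow_mul (S : Finset ℤ) (h : ℤ → ℤ) :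
    ∑ i ∈ S, (i.negOnePow : ℤ) * h i = ∑ i ∈ S with Even i, h i - ∑ i ∈ S with ¬Even i, h i := by
  rw [← Finset.sum_filter_add_sum_filter_not S Even, sub_eq_add_neg, ← Finset.sum_neg_distrib]
  congr 1 <;> refine Finset.sum_congr rfl fun i hi => ?_
  · rw [Int.negOnePow_even i (Finset.mem_filter.1 hi).2, Units.val_one, one_mul]
  · rw [Int.negOnePow_odd i (Int.not_even_iff_odd.1 (Finset.mem_filter.1 hi).2), Units.val_neg,
      Units.val_one, neg_one_mul]

theorem exists_eq_one_of_sum_eq_one {α : Type*} {S : Finset α} {f : α → ℕ}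
    (h : ∑ i ∈ S, f i = 1) : ∃ a ∈ S, f a = 1 ∧ ∀ i ∈ S, i ≠ a → f i = 0 := by
  classical
  obtain ⟨a, ha, hfa⟩ := Finset.exists_ne_zero_of_sum_ne_zero (h.trans_ne one_ne_zero)
  have hsum := Finset.add_sum_erase S f ha
  have hzero : ∑ i ∈ S.erase a, f i = 0 := by omega
  exact ⟨a, ha, by omega,
    fun i hi hne => Finset.sum_eq_zero_iff.1 hzero i (Finset.mem_erase.2 ⟨hne, hi⟩)⟩

theorem eq_two_and_eq_one_of_dvd_sub {p n x y : ℕ} (hp : 2 ≤ p) (hn : n ≤ 2)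
    (hdvd : (p ^ n : ℤ) ∣ x - y) (hpos : 0 < x + y) (hlt : x + y < 2 ^ n) :
    n = 2 ∧ x = 1 ∧ y = 1 := by
  have hpow : (2 ^ n : ℤ) ≤ p ^ n := mod_cast Nat.pow_le_pow_left hp n
  have hlt' : (x + y : ℤ) < 2 ^ n := mod_cast hlt
  have hsub : (x - y : ℤ) = 0 := Int.eq_zero_of_abs_lt_dvd hdvd (by rw [abs_lt]; omega)
  interval_cases n <;> omega

theorem exists_pair_of_dvd_sum_negOnePow_mul {p n : ℕ} (hp : 2 ≤ p) (hn : n ≤ 2)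
    {S : Finset ℤ} {h : ℤ → ℕ} (hS : ∀ i ∉ S, h i = 0)
    (hdvd : (p ^ n : ℤ) ∣ ∑ i ∈ S, (i.negOnePow : ℤ) * h i)
    (hpos : 0 < ∑ i ∈ S, h i) (hlt : ∑ i ∈ S, h i < 2 ^ n) :
    n = 2 ∧ ∃ a c, a < c ∧ h a = 1 ∧ h c = 1 ∧ ∀ i, i ≠ a → i ≠ c → h i = 0 := by
  rw [← Finset.sum_filter_add_sum_filter_not S Even] at hpos hlt
  rw [sum_negOnePow_mul S fun i => (h i : ℤ), ← Nat.cast_sum, ← Nat.cast_sum] at hdvd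
  obtain ⟨rfl, heven, hodd⟩ := eq_two_and_eq_one_of_dvd_sub hp hn hdvd hpos hlt
  obtain ⟨a, ha, ha_one, ha_zero⟩ := exists_eq_one_of_sum_eq_one heven
  obtain ⟨c, hc, hc_one, hc_zero⟩ := exists_eq_one_of_sum_eq_one hodd
  have hac : a ≠ c := by
    rintro rfl
    exact (Finset.mem_filter.1 hc).2 (Finset.mem_filter.1 ha).2
  have hzero (i : ℤ) (hia : i ≠ a) (hic : i ≠ c) : h i = 0 := by
    by_cases hi : i ∈ S
    · by_cases hi_even : Even i
      · exact ha_zero i (Finset.mem_filter.2 ⟨hi, hi_even⟩) hia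
      · exact hc_zero i (Finset.mem_filter.2 ⟨hi, hi_even⟩) hic
    · exact hS i hi
  rcases hac.lt_or_gt with hac | hac
  · exact ⟨rfl, a, c, hac, ha_one, hc_one, hzero⟩
  · exact ⟨rfl, c, a, hac, hc_one, ha_one, fun i hic hia => hzero i hia hic⟩

end AlternatingSum

theorem KGCx.IsPerfect.dvd_sum_negOnePow_mul_finrank_homology {p n : ℕ} [NeZero p] {k : Type}
    [Field k] {C : KGCx p n k 2} (hC : C.IsPerfect) {S : Finset ℤ} (hS : ∀ i ∉ S, C.gr i = ⊥) :
    (p ^ n : ℤ) ∣ ∑ i ∈ S, (i.negOnePow : ℤ) * Module.finrank k (C.Homology i) := by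
  have := hC.finite
  refine dvd_sum_negOnePow_mul (b := fun i => Module.finrank k (C.bdy i)) (fun i hi => ?_)
    (fun i hi => ?_) fun i => ?_
  · rw [KGCx.bdy_eq_bot (hS i hi), Module.finrank_zero_of_subsingleton, Nat.cast_zero]
  · have := KGCx.subsingleton_homology (hS i hi)
    rw [Module.finrank_zero_of_subsingleton, Nat.cast_zero]
  · have hgr := KGCx.finrank_gr_succ (C := C) (i - 1)
    rw [sub_add_cancel, KGCx.finrank_cyc] at hgr
    have hdvd := hC.dvd_finrank_gr i
    rw [hgr] at hdvd
    exact_mod_cast hdvd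

theorem stmt_2_general (p n : ℕ) [Fact p.Prime] (hn : n ≤ 2) (k : Type) [Field k] [CharP k p]
    (C : KGCx p n k 2) (hperf : C.IsPerfect) (hna : C.NonAcyclic) :
    2 ^ n ≤ Module.finrank k C.TotalHomology := by
  have := hperf.finite
  obtain ⟨S, hS⟩ := hperf.exists_finset_gr_eq_bot
  have hpos := hna.finrank_totalHomology_pos
  by_contra! hlt
  rw [KGCx.finrank_totalHomology_eq_sum hS] at hpos hlt
  obtain ⟨rfl, a, c, hac, ha, hc, hzero⟩ := exists_pair_of_dvd_sum_negOnePow_mul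
    (Fact.out : p.Prime).two_le hn
    (fun i hi => have := KGCx.subsingleton_homology (hS i hi)
      Module.finrank_zero_of_subsingleton)
    (hperf.dvd_sum_negOnePow_mul_finrank_homology hS) hpos hlt
  have hproj (i : ℤ) : Module.Projective (GroupRing p 2 k) (C.gr i) :=
    have := hperf.free_gr i
    inferInstance
  obtain ⟨i, hia, hic, hi⟩ := KGCx.not_acyclic_outside_pair hproj hS hac ha hc
  exact hi (KGCx.cyc_eq_bdy (Module.finrank_zero_iff.1 (hzero i hia hic)))

theorem stmt_2 (p n : ℕ) [Fact p.Prime] (hn : n ≤ 2)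
    (C : KGCx p n (ZMod p) 2) (hperf : C.IsPerfect) (hna : C.NonAcyclic) :
    2 ^ n ≤ Module.finrank (ZMod p) C.TotalHomology :=
  stmt_2_general p n hn (ZMod p) C hperf hna
end

section
/- Let p be a prime, k a field of characteristic p, A = k[x_1,…,x_n] graded by deg(x_i) = −1, and M a finitely generated free p-DG A-module. Let m ⊂ A be a maximal ideal of the ungraded polynomial ring A with m ≠ (x_1,…,x_n). If dim_k {}_sH_•(M) < ∞ for all 1 ≤ s ≤ p−1, then for the p-differential A/m-module M⊗_A A/m one has {}_sH(M⊗_A A/m) = ker(d^s)/im(d^{p−s}) = 0 for all 1 ≤ s ≤ p−1. -/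
/-! Statement 12: Let `M` be a finitely generated free `p`-DG `A`-module and `m ⊂ A` a maximal
ideal of the ungraded polynomial ring with `m ≠ (x_1,…,x_n)`.  If `dim_k ₛH(M) < ∞` for all
`1 ≤ s ≤ p-1`, then `ₛH(M ⊗_A A/m) = 0` for all `1 ≤ s ≤ p-1`; elementwise this says that
every `x` with `d^s x ∈ m·M` lies in `im(d^{p-s}) + m·M`. -/

/-- The polynomial ring `A = k[x_1,…,x_n]` (graded by `deg x_i = -1` via the gradings below). -/
abbrev PolyA (n : ℕ) (k : Type) [Field k] : Type := MvPolynomial (Fin n) k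

/-- A `p`-DG module over `A = k[x_1,…,x_n]` with `deg x_i = -1`: a graded `A`-module together
with an `A`-linear differential of degree `-1` satisfying `d ^ p = 0`. -/
structure PDG (p n : ℕ) (k : Type) [Field k] : Type 1 where
  X : Type
  [acg : AddCommGroup X]
  [modA : Module (PolyA n k) X]
  [modk : Module k X]
  [tower : IsScalarTower k (PolyA n k) X]
  d : X →ₗ[PolyA n k] X
  gr : ℤ → Submodule k X
  internal : DirectSum.IsInternal gr
  x_deg : ∀ (i : Fin n) (m : ℤ), ∀ x ∈ gr m, (MvPolynomial.X i : PolyA n k) • x ∈ gr (m - 1)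
  d_deg : ∀ m : ℤ, ∀ x ∈ gr m, d x ∈ gr (m - 1)
  d_pow : d ^ p = 0

attribute [instance] PDG.acg PDG.modA PDG.modk PDG.tower

namespace PDG
variable {p n : ℕ} {k : Type} [Field k] (M : PDG p n k)

/-- `M` is free as a graded `A`-module: it has a homogeneous `A`-basis. -/
def IsFree : Prop :=
  ∃ (ι : Type) (deg : ι → ℤ) (b : Module.Basis ι (PolyA n k) M.X), ∀ a, b a ∈ M.gr (deg a)

/-- `M` is free and finitely generated as a graded `A`-module. -/
def IsFreeFG : Prop :=
  ∃ (ι : Type) (_ : Fintype ι) (deg : ι → ℤ) (b : Module.Basis ι (PolyA n k) M.X),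
    ∀ a, b a ∈ M.gr (deg a)

/-- The submodule `(x_1,…,x_n)·M`, i.e. the kernel of `M → M ⊗_A k`. -/
noncomputable def IM : Submodule (PolyA n k) M.X :=
  (Ideal.span (Set.range (MvPolynomial.X : Fin n → PolyA n k))) • (⊤ : Submodule (PolyA n k) M.X)

/-- The differential as a `k`-linear map. -/
noncomputable def dk : M.X →ₗ[k] M.X := M.d.restrictScalars k

/-- `(x_1,…,x_n)·M` as a `k`-subspace. -/
noncomputable def IMk : Submodule k M.X := M.IM.restrictScalars k

/-- The total homology `ₛH(M) = ker d^s / im d^{p-s}` as a `k`-vector space. -/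
noncomputable abbrev H (s : ℕ) : Type :=
  ↥(LinearMap.ker (M.dk ^ s)) ⧸
    (LinearMap.range (M.dk ^ (p - s))).comap (LinearMap.ker (M.dk ^ s)).subtype

/-- The total homology `ₛH(M ⊗_A k)` as a `k`-vector space, presented as the subquotient
`ker(d̄^s) / im(d̄^{p-s})` of `M/IM` pulled back to `M`. -/
noncomputable abbrev HBar (s : ℕ) : Type :=
  ↥(Submodule.comap (M.dk ^ s) M.IMk) ⧸
    (LinearMap.range (M.dk ^ (p - s)) ⊔ M.IMk).comap (Submodule.comap (M.dk ^ s) M.IMk).subtype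

/-- `ₛH(M ⊗_A k) ≠ 0`. -/
def HBarNonzero (s : ℕ) : Prop :=
  ∃ x : M.X, (M.dk ^ s) x ∈ M.IMk ∧ x ∉ LinearMap.range (M.dk ^ (p - s)) ⊔ M.IMk

end PDG

/-!
Some variable `x_i` lies outside `m`. Multiplication by `x_i` satisfies a monic polynomial on the
finite-dimensional homology of `M`; since `x_i` has nonzero degree, the terms of this polynomial
separate by degree, so a power of `x_i` annihilates the homology. The ideal `m` is generated by a
weakly regular sequence, obtained one variable at a time because polynomial rings over a field are
Jacobson. Reducing `M` modulo this sequence one element at a time, the long exact sequence of the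
2-periodic complex with differentials `d ^ s` and `d ^ (p - s)` shows that a power of `x_i` still
annihilates the homology of `M ⊗ A/m`, where `x_i` acts invertibly.
-/

open MvPolynomial in
theorem isMaximal_idealOfVars (σ k : Type*) [Field k] : (idealOfVars σ k).IsMaximal := by
  have idealOfVars_eq_ker :
      idealOfVars σ k = RingHom.ker (constantCoeff : MvPolynomial σ k →+* k) := by
    ext f
    rw [← pow_one (idealOfVars σ k), mem_pow_idealOfVars_iff', RingHom.mem_ker, constantCoeff_eq]
    simp [Finsupp.degree_eq_zero_iff]
  rw [idealOfVars_eq_ker]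
  exact RingHom.ker_isMaximal_of_surjective _ fun c => ⟨C c, constantCoeff_C σ c⟩

section WeaklyRegularIdeals

open RingTheory.Sequence

/-- The ideal `I` is generated by a weakly regular sequence of the ring. -/
def IsGeneratedByWeaklyRegular {R : Type*} [CommRing R] (I : Ideal R) : Prop :=
  ∃ rs : List R, IsWeaklyRegular R rs ∧ Ideal.ofList rs = I

namespace IsGeneratedByWeaklyRegular

variable {R S : Type*} [CommRing R] [CommRing S] {I : Ideal R}

theorem bot : IsGeneratedByWeaklyRegular (⊥ : Ideal R) :=
  ⟨[], .nil R R, Ideal.ofList_nil⟩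

theorem sup_span_singleton (hI : IsGeneratedByWeaklyRegular I) {f : R}
    (hf : IsSMulRegular (R ⧸ I) f) : IsGeneratedByWeaklyRegular (I ⊔ Ideal.span {f}) := by
  obtain ⟨rs, hrs, rfl⟩ := hI
  refine ⟨rs ++ [f], (isWeaklyRegular_append_iff R rs [f]).2 ⟨hrs, ?_⟩, by simp⟩
  rwa [isWeaklyRegular_singleton_iff, smul_eq_mul, Ideal.mul_top]

theorem map_of_flat (hI : IsGeneratedByWeaklyRegular I) {f : R →+* S} (hf : f.Flat) :
    IsGeneratedByWeaklyRegular (I.map f) := by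
  algebraize [f]
  obtain ⟨rs, hrs, rfl⟩ := hI
  exact ⟨rs.map f, hrs.of_flat, (Ideal.map_ofList f rs).symm⟩

theorem of_map_ringEquiv (e : R ≃+* S) (hI : IsGeneratedByWeaklyRegular (I.map e)) :
    IsGeneratedByWeaklyRegular I := by
  have h := hI.map_of_flat (RingHom.Flat.of_bijective (f := (e.symm : S →+* R)) e.symm.bijective)
  change IsGeneratedByWeaklyRegular ((I.map (e : R →+* S)).map (e.symm : S →+* R)) at h
  rwa [Ideal.map_of_equiv] at h

theorem of_isMaximal_polynomial [IsJacobsonRing R]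
    (hR : ∀ q : Ideal R, q.IsMaximal → IsGeneratedByWeaklyRegular q)
    (m : Ideal (Polynomial R)) (hm : m.IsMaximal) : IsGeneratedByWeaklyRegular m := by
  set q := m.comap Polynomial.C
  have hq : q.IsMaximal := Polynomial.isMaximal_comap_C_of_isJacobsonRing m
  have hqC : IsGeneratedByWeaklyRegular (q.map Polynomial.C) :=
    (hR q hq).map_of_flat <| RingHom.flat_algebraMap_iff.2 inferInstance
  by_cases hmq : m = q.map Polynomial.C
  · rwa [hmq]
  obtain ⟨f, hf, hmf⟩ := Polynomial.exists_monic_span_sup_map_eq R m hq hmq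
  rw [hmf]
  refine hqC.sup_span_singleton ((isSMulRegular_quotient_iff_mem_of_smul_mem _ _).2 fun a ha => ?_)
  rw [← Ideal.mk_ker (I := q), ← Polynomial.ker_mapRingHom, RingHom.mem_ker] at ha ⊢
  rw [smul_eq_mul, map_mul] at ha
  exact ((hf.map (Ideal.Quotient.mk q)).mul_right_eq_zero_iff).1 ha

theorem of_isMaximal_mvPolynomial {k σ : Type*} [Field k] [Finite σ] :
    ∀ m : Ideal (MvPolynomial σ k), m.IsMaximal → IsGeneratedByWeaklyRegular m := by
  induction σ using Finite.induction_empty_option with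
  | of_equiv e ih =>
    intro m hm
    let e' := (MvPolynomial.renameEquiv k e).symm.toRingEquiv
    exact of_map_ringEquiv e' (ih _ (Ideal.map_isMaximal_of_equiv e'))
  | h_empty =>
    intro m hm
    let e := MvPolynomial.isEmptyRingEquiv k PEmpty
    have : (m.map e).IsMaximal := Ideal.map_isMaximal_of_equiv e
    exact of_map_ringEquiv e ((Ideal.eq_bot_of_prime (m.map e)) ▸ bot)
  | @h_option σ _ ih =>
    intro m hm
    let e := (MvPolynomial.optionEquivLeft k σ).toRingEquiv
    exact of_map_ringEquiv e (of_isMaximal_polynomial ih _ (Ideal.map_isMaximal_of_equiv e))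

end IsGeneratedByWeaklyRegular

theorem isWeaklyRegular_of_flat {R X : Type*} [CommRing R] [AddCommGroup X] [Module R X]
    [Module.Flat R X] {rs : List R} (hrs : IsWeaklyRegular R rs) : IsWeaklyRegular X rs :=
  ((TensorProduct.rid R X).isWeaklyRegular_congr rs).1 hrs.isWeaklyRegular_lTensor

end WeaklyRegularIdeals

section Homology

variable {R X Y : Type*} [CommRing R] [AddCommGroup X] [Module R X] [AddCommGroup Y] [Module R Y]

/-- For maps `d₁ : X → Y` and `d₂ : Y → X` whose composites vanish, `r` annihilates the homology
`ker d₁ / im d₂` of the reductions of `d₁`, `d₂` modulo `I`. Classes in `X / I X` are written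
through representatives in `X`. -/
def AnnihilatesHomologyMod (r : R) (I : Ideal R) (d₁ : X →ₗ[R] Y) (d₂ : Y →ₗ[R] X) : Prop :=
  ∀ x, d₁ x ∈ I • (⊤ : Submodule R Y) → r • x ∈ LinearMap.range d₂ ⊔ I • (⊤ : Submodule R X)

namespace AnnihilatesHomologyMod

variable {r s : R} {I : Ideal R} {d₁ : X →ₗ[R] Y} {d₂ : Y →ₗ[R] X}

theorem of_dvd (h : AnnihilatesHomologyMod r I d₁ d₂) (hrs : r ∣ s) :
    AnnihilatesHomologyMod s I d₁ d₂ := by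
  obtain ⟨c, rfl⟩ := hrs
  intro x hx
  rw [mul_comm, mul_smul]
  exact Submodule.smul_mem _ c (h x hx)

-- Multiplication by `f` gives a short exact sequence `0 → X/IX → X/IX → X/(I + (f))X → 0`; this is
-- the diagram chase in its long exact homology sequence.
theorem sup_span_singleton (h₁₂ : AnnihilatesHomologyMod r I d₁ d₂)
    (h₂₁ : AnnihilatesHomologyMod s I d₂ d₁) (hd : d₂ ∘ₗ d₁ = 0) {f : R}
    (hf : IsSMulRegular (X ⧸ I • (⊤ : Submodule R X)) f) :
    AnnihilatesHomologyMod (r * s) (I ⊔ Ideal.span {f}) d₁ d₂ := by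
  intro x hx
  rw [Submodule.sup_smul, Submodule.ideal_span_singleton_smul, Submodule.mem_sup] at hx
  obtain ⟨u, hu, _, ⟨y, -, rfl⟩, hx⟩ := hx
  change u + f • y = d₁ x at hx
  have hfy : f • d₂ y ∈ I • (⊤ : Submodule R X) := by
    have : f • d₂ y = -d₂ u := by
      rw [eq_neg_iff_add_eq_zero, add_comm, ← map_smul, ← map_add, hx, ← LinearMap.comp_apply, hd,
        LinearMap.zero_apply]
    exact this ▸ neg_mem (Submodule.smul_top_le_comap_smul_top I d₂ hu)
  obtain ⟨_, ⟨z, rfl⟩, v, hv, hz⟩ :=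
    Submodule.mem_sup.1 (h₂₁ y (mem_of_isSMulRegular_quotient_of_smul_mem hf hfy))
  have hsx : d₁ (s • x - f • z) ∈ I • (⊤ : Submodule R Y) := by
    have : d₁ (s • x - f • z) = s • u + f • v := by
      rw [eq_sub_of_add_eq' hz, map_sub, map_smul, map_smul, ← hx]
      module
    exact this ▸ add_mem (Submodule.smul_mem _ s hu) (Submodule.smul_mem _ f hv)
  have hrsx : (r * s) • x = r • (s • x - f • z) + f • r • z := by module
  rw [hrsx, Submodule.sup_smul, ← sup_assoc, Submodule.ideal_span_singleton_smul]
  exact Submodule.add_mem_sup (h₁₂ _ hsx) (Submodule.smul_mem_pointwise_smul _ f ⊤ trivial)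

open RingTheory.Sequence in
theorem of_isWeaklyRegular (h₁₂ : AnnihilatesHomologyMod r ⊥ d₁ d₂)
    (h₂₁ : AnnihilatesHomologyMod r ⊥ d₂ d₁) (hd₁₂ : d₁ ∘ₗ d₂ = 0) (hd₂₁ : d₂ ∘ₗ d₁ = 0)
    {rs : List R} (hX : IsWeaklyRegular X rs) (hY : IsWeaklyRegular Y rs) :
    AnnihilatesHomologyMod (r ^ 2 ^ rs.length) (Ideal.ofList rs) d₁ d₂ ∧
      AnnihilatesHomologyMod (r ^ 2 ^ rs.length) (Ideal.ofList rs) d₂ d₁ := by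
  induction rs using List.reverseRecOn with
  | nil => simpa using ⟨h₁₂, h₂₁⟩
  | append_singleton rs f ih =>
    rw [isWeaklyRegular_append_iff, isWeaklyRegular_singleton_iff] at hX hY
    obtain ⟨ih₁₂, ih₂₁⟩ := ih hX.1 hY.1
    rw [List.length_append, List.length_singleton, pow_succ, pow_mul, sq, Ideal.ofList_append,
      Ideal.ofList_singleton]
    exact ⟨ih₁₂.sup_span_singleton ih₂₁ hd₂₁ hX.2, ih₂₁.sup_span_singleton ih₁₂ hd₁₂ hY.2⟩

theorem mem_of_isUnit_mk (h : AnnihilatesHomologyMod r I d₁ d₂)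
    (hr : IsUnit (Ideal.Quotient.mk I r)) {x : X} (hx : d₁ x ∈ I • (⊤ : Submodule R Y)) :
    x ∈ LinearMap.range d₂ ⊔ I • (⊤ : Submodule R X) := by
  obtain ⟨c', hc⟩ := hr.exists_left_inv
  obtain ⟨c, rfl⟩ := Ideal.Quotient.mk_surjective c'
  rw [← map_mul, ← map_one (Ideal.Quotient.mk I), Ideal.Quotient.eq] at hc
  have hx_eq : x = c • r • x - (c * r - 1) • x := by module
  rw [hx_eq]
  exact sub_mem (Submodule.smul_mem _ c (h x hx))
    (Submodule.mem_sup_right (Submodule.smul_mem_smul hc trivial))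

end AnnihilatesHomologyMod

end Homology

section Graded

open DirectSum

variable {ι k V : Type*} [AddGroup ι] [CommRing k] [AddCommGroup V] [Module k V]
  (𝓥 : ι → Submodule k V) {f : V →ₗ[k] V} {e : ι}

/-- The endomorphism `f` of a graded module is homogeneous of degree `e`. -/
def IsHomogeneousOfDegree (f : V →ₗ[k] V) (e : ι) : Prop :=
  ∀ i, ∀ x ∈ 𝓥 i, f x ∈ 𝓥 (i + e)

namespace IsHomogeneousOfDegree

variable {𝓥}

theorem pow (hf : IsHomogeneousOfDegree 𝓥 f e) (n : ℕ) :
    IsHomogeneousOfDegree 𝓥 (f ^ n) (n • e) := by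
  induction n with
  | zero => simp [IsHomogeneousOfDegree]
  | succ n ih =>
    intro i x hx
    rw [pow_succ', Module.End.mul_apply, succ_nsmul, ← add_assoc]
    exact hf _ _ (ih i x hx)

variable [DecidableEq ι] [Decomposition 𝓥]

theorem coe_decompose_apply (hf : IsHomogeneousOfDegree 𝓥 f e) (x : V) (i : ι) :
    (decompose 𝓥 (f x) (i + e) : V) = f (decompose 𝓥 x i) := by
  induction x using Decomposition.inductionOn 𝓥 with
  | zero => simp
  | @homogeneous j x =>
    obtain rfl | hij := eq_or_ne j i
    · rw [decompose_of_mem_same 𝓥 (hf _ _ x.2), decompose_of_mem_same 𝓥 x.2]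
    · rw [decompose_of_mem_ne 𝓥 (hf _ _ x.2) (by simpa using hij), decompose_of_mem_ne 𝓥 x.2 hij,
        map_zero]
  | add x y hx hy =>
    simp only [map_add, decompose_add, DirectSum.add_apply, Submodule.coe_add, hx, hy]

theorem coe_decompose_apply_eq_apply_sub (hf : IsHomogeneousOfDegree 𝓥 f e) (x : V) (i : ι) :
    (decompose 𝓥 (f x) i : V) = f (decompose 𝓥 x (i - e)) := by
  rw [← hf.coe_decompose_apply, sub_add_cancel]

theorem isHomogeneous_ker (hf : IsHomogeneousOfDegree 𝓥 f e) :
    (LinearMap.ker f).IsHomogeneous 𝓥 := fun i x hx => by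
  rw [LinearMap.mem_ker] at hx ⊢
  rw [← hf.coe_decompose_apply, hx, decompose_zero, DirectSum.zero_apply, Submodule.coe_zero]

theorem isHomogeneous_range (hf : IsHomogeneousOfDegree 𝓥 f e) :
    (LinearMap.range f).IsHomogeneous 𝓥 := by
  rintro i _ ⟨x, rfl⟩
  exact ⟨_, (hf.coe_decompose_apply_eq_apply_sub x i).symm⟩

open Polynomial in
theorem coe_decompose_aeval_apply (hf : IsHomogeneousOfDegree 𝓥 f e) (he : ¬IsOfFinAddOrder e)
    (q : k[X]) {i : ι} {x : V} (hx : x ∈ 𝓥 i) (n : ℕ) :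
    (decompose 𝓥 (aeval f q x) (i + n • e) : V) = q.coeff n • (f ^ n) x := by
  induction q using Polynomial.induction_on' with
  | add p q hp hq =>
    simp only [map_add, LinearMap.add_apply, decompose_add, DirectSum.add_apply, Submodule.coe_add,
      hp, hq, coeff_add, add_smul]
  | monomial m a =>
    have hm : a • (f ^ m) x ∈ 𝓥 (i + m • e) := Submodule.smul_mem _ a (hf.pow m i x hx)
    rw [aeval_monomial, Module.End.mul_apply, Module.algebraMap_end_apply, coeff_monomial]
    split_ifs with hmn
    · rw [← hmn, decompose_of_mem_same 𝓥 hm]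
    · have hne : i + m • e ≠ i + n • e :=
        fun h => hmn (injective_nsmul_iff_not_isOfFinAddOrder.2 he (add_left_cancel h))
      rw [decompose_of_mem_ne 𝓥 hm hne, zero_smul]

-- On a homogeneous element the monomials of `q f` land in distinct degrees, so a homogeneous
-- submodule containing their sum contains the leading one.
open Polynomial in
theorem pow_natDegree_apply_mem (hf : IsHomogeneousOfDegree 𝓥 f e) (he : ¬IsOfFinAddOrder e)
    {K S : Submodule k V} (hK : K.IsHomogeneous 𝓥) (hS : S.IsHomogeneous 𝓥) {q : k[X]}
    (hq : q.Monic) (hKS : ∀ x ∈ K, aeval f q x ∈ S) {x : V} (hx : x ∈ K) :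
    (f ^ q.natDegree) x ∈ S := by
  refine (Submodule.IsHomogeneous.mem_iff 𝓥 hS).2 fun i => ?_
  rw [(hf.pow _).coe_decompose_apply_eq_apply_sub]
  have h := hS (i - q.natDegree • e + q.natDegree • e) (hKS _ (hK (i - q.natDegree • e) hx))
  rwa [hf.coe_decompose_aeval_apply he q (SetLike.coe_mem _), hq.coeff_natDegree, one_smul] at h

end IsHomogeneousOfDegree

end Graded

open Polynomial in
theorem exists_monic_aeval_smul_mem {k A X : Type*} [CommRing k] [CommRing A] [Algebra k A]
    [AddCommGroup X] [Module k X] [Module A X] [IsScalarTower k A X] (K N : Submodule A X)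
    [Module.Finite k (K ⧸ N.comap K.subtype)] (a : A) :
    ∃ q : k[X], q.Monic ∧ ∀ x ∈ K, aeval a q • x ∈ N := by
  obtain ⟨q, hq, hqa⟩ :=
    LinearMap.exists_monic_and_aeval_eq_zero k (Algebra.lsmul k k (K ⧸ N.comap K.subtype) a)
  rw [aeval_algHom_apply] at hqa
  exact ⟨q, hq, fun x hx => (Submodule.Quotient.mk_eq_zero (N.comap K.subtype)).1
    (LinearMap.congr_fun hqa (Submodule.Quotient.mk ⟨x, hx⟩))⟩

namespace PDG

variable {p n : ℕ} {k : Type} [Field k] (M : PDG p n k)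

theorem dk_pow (s : ℕ) : M.dk ^ s = (M.d ^ s).restrictScalars k := by
  ext x
  rw [LinearMap.coe_restrictScalars, Module.End.pow_apply, Module.End.pow_apply]
  rfl

theorem d_pow_comp_d_pow {s t : ℕ} (hst : s + t = p) : (M.d ^ s) ∘ₗ (M.d ^ t) = 0 := by
  rw [← Module.End.mul_eq_comp, ← pow_add, hst, M.d_pow]

theorem isHomogeneousOfDegree_dk : IsHomogeneousOfDegree M.gr M.dk (-1) := M.d_deg

theorem isHomogeneousOfDegree_lsmul_X (i : Fin n) :
    IsHomogeneousOfDegree M.gr (Algebra.lsmul k k M.X (MvPolynomial.X i : PolyA n k)) (-1) :=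
  M.x_deg i

theorem finite_ker_quotient_range {s t : ℕ} (hst : s + t = p)
    [hfin : FiniteDimensional k (M.H s)] :
    Module.Finite k (LinearMap.ker (M.d ^ s) ⧸
      (LinearMap.range (M.d ^ t)).comap (LinearMap.ker (M.d ^ s)).subtype) := by
  obtain rfl : t = p - s := by omega
  unfold H at hfin
  rw [dk_pow, dk_pow] at hfin
  exact hfin

theorem exists_annihilatesHomologyMod_X_pow (i : Fin n) {s t : ℕ} (hst : s + t = p)
    [FiniteDimensional k (M.H s)] :
    ∃ N : ℕ, AnnihilatesHomologyMod ((MvPolynomial.X i : PolyA n k) ^ N) ⊥ (M.d ^ s) (M.d ^ t) := by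
  let := M.internal.chooseDecomposition
  have := M.finite_ker_quotient_range hst
  obtain ⟨q, hq, hqX⟩ := exists_monic_aeval_smul_mem (k := k) (LinearMap.ker (M.d ^ s))
    (LinearMap.range (M.d ^ t)) (MvPolynomial.X i : PolyA n k)
  have he : ¬IsOfFinAddOrder (-1 : ℤ) := not_isOfFinAddOrder_of_isAddTorsionFree (by decide)
  refine ⟨q.natDegree, fun x hx => ?_⟩
  rw [Submodule.bot_smul, Submodule.mem_bot] at hx
  rw [Submodule.bot_smul, sup_bot_eq]
  have h := (M.isHomogeneousOfDegree_lsmul_X i).pow_natDegree_apply_mem he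
    (M.isHomogeneousOfDegree_dk.pow s).isHomogeneous_ker
    (M.isHomogeneousOfDegree_dk.pow t).isHomogeneous_range hq
    (fun y hy => by
      rw [dk_pow] at hy ⊢
      rw [Polynomial.aeval_algHom_apply]
      exact hqX y hy)
    (x := x) (by rwa [dk_pow])
  rwa [← map_pow, dk_pow] at h

end PDG

theorem stmt_12_general {p n : ℕ} {k : Type} [Field k] (M : PDG p n k)
    [Module.Flat (PolyA n k) M.X] {m : Ideal (PolyA n k)} (hmax : m.IsMaximal)
    (hne : m ≠ Ideal.span (Set.range (MvPolynomial.X : Fin n → PolyA n k)))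
    {s t : ℕ} (hst : s + t = p) [FiniteDimensional k (M.H s)] [FiniteDimensional k (M.H t)]
    {x : M.X} (hx : (M.d ^ s) x ∈ m • (⊤ : Submodule (PolyA n k) M.X)) :
    x ∈ LinearMap.range (M.d ^ t) ⊔ m • (⊤ : Submodule (PolyA n k) M.X) := by
  have hts : t + s = p := by omega
  obtain ⟨i, hi⟩ : ∃ i, (MvPolynomial.X i : PolyA n k) ∉ m := by
    by_contra! hX
    exact hne ((isMaximal_idealOfVars (Fin n) k).eq_of_le hmax.ne_top
      (Ideal.span_le.2 (Set.range_subset_iff.2 hX))).symm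
  have hunit : IsUnit (Ideal.Quotient.mk m (MvPolynomial.X i)) := by
    let := Ideal.Quotient.field m
    rwa [isUnit_iff_ne_zero, Ne, Ideal.Quotient.eq_zero_iff_mem]
  obtain ⟨N₁, h₁⟩ := M.exists_annihilatesHomologyMod_X_pow i hst
  obtain ⟨N₂, h₂⟩ := M.exists_annihilatesHomologyMod_X_pow i hts
  obtain ⟨rs, hrs, rfl⟩ := IsGeneratedByWeaklyRegular.of_isMaximal_mvPolynomial m hmax
  have hrsM := isWeaklyRegular_of_flat (X := M.X) hrs
  have h := (h₁.of_dvd (dvd_mul_right _ _)).of_isWeaklyRegular (h₂.of_dvd (dvd_mul_left _ _))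
    (M.d_pow_comp_d_pow hst) (M.d_pow_comp_d_pow hts) hrsM hrsM
  refine h.1.mem_of_isUnit_mk ?_ hx
  simp only [map_pow, map_mul]
  exact ((hunit.pow N₁).mul (hunit.pow N₂)).pow _

theorem stmt_12 (p n : ℕ) (hp : p.Prime) (k : Type) [Field k] [CharP k p]
    (M : PDG p n k) (hfree : M.IsFreeFG)
    (m : Ideal (PolyA n k)) (hmax : m.IsMaximal)
    (hne : m ≠ Ideal.span (Set.range (MvPolynomial.X : Fin n → PolyA n k)))
    (hfin : ∀ s : ℕ, 1 ≤ s → s ≤ p - 1 → FiniteDimensional k (M.H s)) :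
    ∀ s : ℕ, 1 ≤ s → s ≤ p - 1 →
      ∀ x : M.X, (M.d ^ s) x ∈ m • (⊤ : Submodule (PolyA n k) M.X) →
        x ∈ LinearMap.range (M.d ^ (p - s)) ⊔ m • (⊤ : Submodule (PolyA n k) M.X) := by
  intro s hs hsp x hx
  obtain ⟨ι, _, _, b, _⟩ := hfree
  have := Module.Free.of_basis b
  have := hfin s hs hsp
  have := hfin (p - s) (by omega) (by omega)
  exact stmt_12_general M hmax hne (by omega) hx
end
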